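/- arXiv:1204.4982 — 10 statements merged into one kernel-verified Lean document; each statement's English description precedes it below -/
import Mathlib

section
/- Let E be an irreducible regular expression over an alphabet Σ with alph(E) ≥ 1. Then |E| ≤ 11·alph(E) − 4 and rpn(E) ≤ 7·alph(E) − 2. -/
/-!
The only irreducible expressions without letters are `∅`, `ε` and `ε*`. Hence in an irreducible
`E ≠ ∅` a letter-free operand of `+` or `·` can only be a summand `ε` or `ε*` of a union whose other
summand does not accept the empty word; such a union accepts the empty word afterwards, so the
overhead cannot be stacked, and likewise a star cannot be applied to a star. An induction on `E`
therefore works once the bounds are sharpened to three levels (`Bounds`): one for all expressions,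
a better one for expressions that are not stars, and the best one for expressions that do not
accept the empty word. The extremal one-letter case is `(ε* + a)*`.
-/


open RegularExpression

/-- Reverse polish length: number of nodes of the syntax tree. -/
def rpn {α : Type*} : RegularExpression α → ℕ
  | RegularExpression.zero => 1
  | RegularExpression.epsilon => 1
  | RegularExpression.char _ => 1
  | RegularExpression.plus F G => rpn F + rpn G + 1
  | RegularExpression.comp F G => rpn F + rpn G + 1
  | RegularExpression.star F => rpn F + 1

/-- Alphabetic width: number of occurrences of alphabet letters. -/
def alph {α : Type*} : RegularExpression α → ℕ
  | RegularExpression.zero => 0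
  | RegularExpression.epsilon => 0
  | RegularExpression.char _ => 1
  | RegularExpression.plus F G => alph F + alph G
  | RegularExpression.comp F G => alph F + alph G
  | RegularExpression.star F => alph F

/-- Is the top-level operator a union? -/
def isPlus {α : Type*} : RegularExpression α → Bool
  | RegularExpression.plus _ _ => true
  | _ => false

/-- Is the top-level operator a concatenation? -/
def isComp {α : Type*} : RegularExpression α → Bool
  | RegularExpression.comp _ _ => true
  | _ => false

/-- Ordinary length: length of the string denoting the expression under the usual
priority rules, with only necessary parentheses. -/
def ord {α : Type*} : RegularExpression α → ℕ
  | RegularExpression.zero => 1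
  | RegularExpression.epsilon => 1
  | RegularExpression.char _ => 1
  | RegularExpression.plus F G => ord F + ord G + 1
  | RegularExpression.comp F G =>
      (ord F + if isPlus F then 2 else 0) + (ord G + if isPlus G then 2 else 0)
  | RegularExpression.star F =>
      (ord F + if isPlus F || isComp F then 2 else 0) + 1

/-- `Subexpr F E` means `F` occurs as a subexpression (a node of the syntax tree) of `E`. -/
inductive Subexpr {α : Type*} : RegularExpression α → RegularExpression α → Prop
  | refl (E : RegularExpression α) : Subexpr E E
  | plus_left {T F G : RegularExpression α} : Subexpr T F → Subexpr T (RegularExpression.plus F G)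
  | plus_right {T F G : RegularExpression α} : Subexpr T G → Subexpr T (RegularExpression.plus F G)
  | comp_left {T F G : RegularExpression α} : Subexpr T F → Subexpr T (RegularExpression.comp F G)
  | comp_right {T F G : RegularExpression α} : Subexpr T G → Subexpr T (RegularExpression.comp F G)
  | star {T F : RegularExpression α} : Subexpr T F → Subexpr T (RegularExpression.star F)

/-- A regular expression is collapsible if (1) the symbol ∅ occurs in it and it is
not literally ∅, or (2) it has a subexpression `F·G` or `G·F` with `L(F) = {ε}`, or
(3) it has a subexpression `F+G` or `G+F` with `L(F) = {ε}` and `ε ∈ L(G)`. -/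
def Collapsible {α : Type*} (E : RegularExpression α) : Prop :=
  (Subexpr RegularExpression.zero E ∧ E ≠ RegularExpression.zero) ∨
  (∃ F G : RegularExpression α,
      (Subexpr (RegularExpression.comp F G) E ∨ Subexpr (RegularExpression.comp G F) E) ∧
      F.matches' = 1) ∨
  (∃ F G : RegularExpression α,
      (Subexpr (RegularExpression.plus F G) E ∨ Subexpr (RegularExpression.plus G F) E) ∧
      F.matches' = 1 ∧ [] ∈ G.matches')

/-- A regular expression is irreducible if it is uncollapsible and has no subexpression
of the form `F**`. -/
def IrreducibleRE {α : Type*} (E : RegularExpression α) : Prop :=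
  ¬ Collapsible E ∧
  ¬ ∃ F : RegularExpression α, Subexpr (RegularExpression.star (RegularExpression.star F)) E

/-- The local conditions which irreducibility imposes on the nodes of an expression in which `∅`
does not occur. -/
def LocallyReduced {α : Type*} : RegularExpression α → Prop
  | RegularExpression.zero => False
  | RegularExpression.epsilon => True
  | RegularExpression.char _ => True
  | RegularExpression.plus F G => LocallyReduced F ∧ LocallyReduced G ∧
      ¬ (F.matches' = 1 ∧ [] ∈ G.matches') ∧ ¬ (G.matches' = 1 ∧ [] ∈ F.matches')
  | RegularExpression.comp F G => LocallyReduced F ∧ LocallyReduced G ∧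
      F.matches' ≠ 1 ∧ G.matches' ≠ 1
  | RegularExpression.star F => LocallyReduced F ∧ ∀ H, F ≠ RegularExpression.star H

theorem Subexpr.trans {α : Type*} {A B C : RegularExpression α}
    (hAB : Subexpr A B) (hBC : Subexpr B C) : Subexpr A C := by
  induction hBC with
  | refl => exact hAB
  | plus_left _ ih => exact .plus_left ih
  | plus_right _ ih => exact .plus_right ih
  | comp_left _ ih => exact .comp_left ih
  | comp_right _ ih => exact .comp_right ih
  | star _ ih => exact .star ih

/-- The induction runs over the subexpressions `T` of a fixed `E ≠ ∅`: irreducibility of `E` is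
a statement about all of them at once. -/
theorem IrreducibleRE.locallyReduced {α : Type*} {E : RegularExpression α}
    (hirr : IrreducibleRE E) (hE : E ≠ RegularExpression.zero) (T : RegularExpression α)
    (hT : Subexpr T E) : LocallyReduced T := by
  obtain ⟨hcol, hstar⟩ := hirr
  induction T with
  | zero => exact hcol (Or.inl ⟨hT, hE⟩)
  | epsilon => trivial
  | char a => trivial
  | plus F G ihF ihG =>
    exact ⟨ihF ((Subexpr.plus_left (.refl F)).trans hT),
      ihG ((Subexpr.plus_right (.refl G)).trans hT),
      fun h => hcol (Or.inr (Or.inr ⟨F, G, Or.inl hT, h⟩)),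
      fun h => hcol (Or.inr (Or.inr ⟨G, F, Or.inr hT, h⟩))⟩
  | comp F G ihF ihG =>
    exact ⟨ihF ((Subexpr.comp_left (.refl F)).trans hT),
      ihG ((Subexpr.comp_right (.refl G)).trans hT),
      fun h => hcol (Or.inr (Or.inl ⟨F, G, Or.inl hT, h⟩)),
      fun h => hcol (Or.inr (Or.inl ⟨G, F, Or.inr hT, h⟩))⟩
  | star F ihF =>
    refine ⟨ihF ((Subexpr.star (.refl F)).trans hT), ?_⟩
    rintro H rfl
    exact hstar ⟨H, hT⟩

theorem matches'_star_epsilon {α : Type*} :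
    (RegularExpression.star RegularExpression.epsilon : RegularExpression α).matches' = 1 :=
  kstar_one

theorem LocallyReduced.eq_of_alph_eq_zero {α : Type*} {E : RegularExpression α}
    (hE : LocallyReduced E) (h0 : alph E = 0) :
    E = RegularExpression.epsilon ∨ E = RegularExpression.star RegularExpression.epsilon := by
  have key : ∀ F : RegularExpression α, F = RegularExpression.epsilon ∨
      F = RegularExpression.star RegularExpression.epsilon → F.matches' = 1 := by
    rintro F (rfl | rfl)
    · rfl
    · exact matches'_star_epsilon
  induction E with
  | zero => exact hE.elim
  | epsilon => exact Or.inl rfl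
  | char a => simp [alph] at h0
  | plus F G ihF ihG =>
    obtain ⟨hF, hG, h1, -⟩ := hE
    simp only [alph, Nat.add_eq_zero_iff] at h0
    refine (h1 ⟨key F (ihF hF h0.1), ?_⟩).elim
    rw [key G (ihG hG h0.2)]
    exact Language.nil_mem_one
  | comp F G ihF ihG =>
    obtain ⟨hF, hG, h1, -⟩ := hE
    simp only [alph, Nat.add_eq_zero_iff] at h0
    exact (h1 (key F (ihF hF h0.1))).elim
  | star F ihF =>
    rcases ihF hE.1 h0 with rfl | rfl
    · exact Or.inr rfl
    · exact (hE.2 _ rfl).elim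

/-- The properties of a letter-free operand that the size estimates use. -/
theorem LocallyReduced.bounds_of_alph_eq_zero {α : Type*} {E : RegularExpression α}
    (hE : LocallyReduced E) (h0 : alph E = 0) :
    E.matches' = 1 ∧ [] ∈ E.matches' ∧ rpn E ≤ 2 ∧ ord E ≤ 2 := by
  have h1 : E.matches' = 1 ∧ rpn E ≤ 2 ∧ ord E ≤ 2 := by
    rcases hE.eq_of_alph_eq_zero h0 with rfl | rfl
    · exact ⟨rfl, by simp [rpn], by simp [ord]⟩
    · exact ⟨matches'_star_epsilon, by simp [rpn], by simp [ord, isPlus, isComp]⟩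
  exact ⟨h1.1, h1.1 ▸ Language.nil_mem_one, h1.2⟩

/-- The sharpened bounds proved by induction: for arbitrary expressions (including the
parentheses around a union used as a factor), for expressions that are not stars (including the
parentheses needed under a star), and for expressions that do not accept the empty word. -/
structure Bounds {α : Type*} (E : RegularExpression α) : Prop where
  rpn_le : rpn E + 2 ≤ 7 * alph E
  ord_le : (ord E + if isPlus E then 2 else 0) + 4 ≤ 11 * alph E
  rpn_le_of_not_star : (∀ H, E ≠ RegularExpression.star H) → rpn E + 3 ≤ 7 * alph E
  ord_le_of_not_star : (∀ H, E ≠ RegularExpression.star H) →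
    (ord E + if isPlus E || isComp E then 2 else 0) + 5 ≤ 11 * alph E
  rpn_le_of_nil_notMem : [] ∉ E.matches' → rpn E + 6 ≤ 7 * alph E
  ord_le_of_nil_notMem : [] ∉ E.matches' → ord E + 10 ≤ 11 * alph E

theorem LocallyReduced.bounds {α : Type*} {E : RegularExpression α}
    (hE : LocallyReduced E) (h1 : 1 ≤ alph E) : Bounds E := by
  induction E with
  | zero => exact hE.elim
  | epsilon => simp [alph] at h1
  | char a => constructor <;> simp [rpn, ord, alph, isPlus, isComp]
  | plus F G ihF ihG =>
    obtain ⟨hF, hG, hFG, hGF⟩ := hE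
    have hnil : [] ∈ (RegularExpression.plus F G).matches' ↔
        [] ∈ F.matches' ∨ [] ∈ G.matches' := Iff.rfl
    simp only [alph] at h1
    suffices h : rpn F + rpn G + 1 + 3 ≤ 7 * (alph F + alph G) ∧
        ord F + ord G + 1 + 2 + 5 ≤ 11 * (alph F + alph G) ∧
        ([] ∉ F.matches' → [] ∉ G.matches' →
          rpn F + rpn G + 1 + 6 ≤ 7 * (alph F + alph G) ∧
          ord F + ord G + 1 + 10 ≤ 11 * (alph F + alph G)) by
      obtain ⟨hr, ho, hn⟩ := h
      constructor <;> simp only [rpn, ord, alph, isPlus, hnil, not_or, Bool.true_or, if_true]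
      · lia
      · lia
      · exact fun _ => hr
      · exact fun _ => ho
      · exact fun h => (hn h.1 h.2).1
      · exact fun h => (hn h.1 h.2).2
    rcases Nat.eq_zero_or_pos (alph F) with hF0 | hF0
    · obtain ⟨hF1, hFnil, hFr, hFo⟩ := hF.bounds_of_alph_eq_zero hF0
      have hGnil : [] ∉ G.matches' := fun h => hFG ⟨hF1, h⟩
      have b := ihG hG (by lia)
      have := b.rpn_le_of_nil_notMem hGnil
      have := b.ord_le_of_nil_notMem hGnil
      exact ⟨by lia, by lia, fun h => (h hFnil).elim⟩
    · rcases Nat.eq_zero_or_pos (alph G) with hG0 | hG0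
      · obtain ⟨hG1, hGnil, hGr, hGo⟩ := hG.bounds_of_alph_eq_zero hG0
        have hFnil : [] ∉ F.matches' := fun h => hGF ⟨hG1, h⟩
        have b := ihF hF hF0
        have := b.rpn_le_of_nil_notMem hFnil
        have := b.ord_le_of_nil_notMem hFnil
        exact ⟨by lia, by lia, fun _ h => (h hGnil).elim⟩
      · have bF := ihF hF hF0
        have bG := ihG hG hG0
        have := bF.rpn_le
        have := bG.rpn_le
        have := bF.ord_le
        have := bG.ord_le
        refine ⟨by lia, by lia, fun hFn hGn => ?_⟩
        have := bF.rpn_le_of_nil_notMem hFn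
        have := bG.rpn_le_of_nil_notMem hGn
        have := bF.ord_le_of_nil_notMem hFn
        have := bG.ord_le_of_nil_notMem hGn
        exact ⟨by lia, by lia⟩
  | comp F G ihF ihG =>
    obtain ⟨hF, hG, hF1, hG1⟩ := hE
    have hF0 : 1 ≤ alph F := Nat.pos_of_ne_zero fun h => hF1 (hF.bounds_of_alph_eq_zero h).1
    have hG0 : 1 ≤ alph G := Nat.pos_of_ne_zero fun h => hG1 (hG.bounds_of_alph_eq_zero h).1
    have hnil : [] ∉ (RegularExpression.comp F G).matches' →
        [] ∉ F.matches' ∨ [] ∉ G.matches' := fun h =>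
      not_and_or.1 fun hm => h (Language.append_mem_mul hm.1 hm.2)
    have bF := ihF hF hF0
    have bG := ihG hG hG0
    have := bF.rpn_le
    have := bG.rpn_le
    have := bF.ord_le
    have := bG.ord_le
    have hpF : (if isPlus F then 2 else 0) ≤ 2 := by split <;> lia
    have hpG : (if isPlus G then 2 else 0) ≤ 2 := by split <;> lia
    have hP : isPlus (RegularExpression.comp F G) = false := rfl
    have hC : isComp (RegularExpression.comp F G) = true := rfl
    constructor <;> simp only [rpn, ord, alph, hP, hC, Bool.false_eq_true,
      Bool.or_true, if_true, if_false]
    · lia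
    · lia
    · exact fun _ => by lia
    · exact fun _ => by lia
    · intro h
      rcases hnil h with h | h
      · have := bF.rpn_le_of_nil_notMem h
        lia
      · have := bG.rpn_le_of_nil_notMem h
        lia
    · intro h
      rcases hnil h with h | h
      · have := bF.ord_le_of_nil_notMem h
        lia
      · have := bG.ord_le_of_nil_notMem h
        lia
  | star F ihF =>
    obtain ⟨hF, hns⟩ := hE
    simp only [alph] at h1
    have b := ihF hF h1
    have hr := b.rpn_le_of_not_star hns
    have ho := b.ord_le_of_not_star hns
    have hnil : [] ∈ (RegularExpression.star F).matches' := Language.nil_mem_kstar _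
    constructor
    · simp only [rpn, alph]
      lia
    · have hP : isPlus (RegularExpression.star F) = false := rfl
      simp only [ord, alph, hP, Bool.false_eq_true, if_false]
      lia
    · exact fun h => (h F rfl).elim
    · exact fun h => (h F rfl).elim
    · exact fun h => (h hnil).elim
    · exact fun h => (h hnil).elim

theorem irreducible_size_bounds {α : Type*} (E : RegularExpression α)
    (hirr : IrreducibleRE E) (halph : 1 ≤ alph E) :
    ord E ≤ 11 * alph E - 4 ∧ rpn E ≤ 7 * alph E - 2 := by
  have hE : E ≠ RegularExpression.zero := by
    rintro rfl
    simp [alph] at halph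
  have b := (hirr.locallyReduced hE E (.refl E)).bounds halph
  have := b.rpn_le
  have := b.ord_le
  exact ⟨by lia, by lia⟩
end

section
/- (Chomsky–Schützenberger) Let Σ be a finite alphabet and let G be an unambiguous context-free grammar over Σ. For n ≥ 0 let a_n = |L(G) ∩ Σ^n| (a finite number). Then the formal power series f = Σ_{n≥0} a_n x^n, viewed in ℚ⟦x⟧, is algebraic over ℚ(x): there exists a nonzero polynomial Q with coefficients in the polynomial ring ℚ[x] such that, after mapping the coefficients of Q into ℚ⟦x⟧ via the canonical embedding ℚ[x] → ℚ⟦x⟧, Q evaluated at f equals 0. -/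
/-!
Weight a leftmost derivation that takes `m` steps and ends in a word of length `n` by `x ^ n * t ^ m`,
and let `F_α ∈ ℚ[x]⟦t⟧` (`derivSeries`) be the generating function of all leftmost derivations
starting at the sentential form `α`. Then `F_{αβ} = F_α F_β` (`derivSeries_append`), and
`F_A = t ∑_{A → γ} F_γ`, so the finitely many nonzero `F_A` solve a polynomial system
`y_A = t Q_A(y)` over `ℚ[x][t]`.

The Jacobian matrix of the right-hand sides is divisible by `t`, so `1 - J` is nonsingular. For any
derivation `D` over the base field, `D F = J (D F)`, hence `D F = 0`. Therefore the field generated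
by the `F_A` has no Kähler differentials, and, being finitely generated in characteristic zero, is
algebraic over `ℚ(x, t)` (`isAlgebraic_of_system`). The marker `t` makes this work for every
grammar, with no need to eliminate empty or unit productions first.

Unambiguity enters only when setting `t = 1`: each word of the language has exactly one derivation,
so the coefficient of `x ^ n` in `F_S` is a polynomial in `t`, whose value at `t = 1` is the number
of words of length `n` (`exists_derivCount_eq`, `coeff_stepPoly`). An annihilating polynomial of
`F_S` that is primitive over `ℚ[x][t]` is not divisible by `t - 1`, so it stays nonzero
at `t = 1` (`exists_annihilator_of_specialization`).
-/


/-- A leftmost derivation step of a context-free grammar: the leftmost nonterminal is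
rewritten, i.e. `uAv ⇒ uγv` where `u` consists only of terminals and `A → γ` is a rule. -/
def LeftmostStep {T : Type*} (g : ContextFreeGrammar T)
    (s t : List (Symbol T g.NT)) : Prop :=
  ∃ r ∈ g.rules, ∃ (u : List T) (v : List (Symbol T g.NT)),
    s = (u.map Symbol.terminal) ++ [Symbol.nonterminal r.input] ++ v ∧
    t = (u.map Symbol.terminal) ++ r.output ++ v

/-- `d` is a leftmost derivation of the terminal word `w`: a sequence of sentential
forms beginning with the single-symbol string consisting of the start nonterminal,
ending with `w`, in which each consecutive pair is related by a leftmost step. -/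
def IsLeftmostDerivation {T : Type*} (g : ContextFreeGrammar T) (w : List T)
    (d : List (List (Symbol T g.NT))) : Prop :=
  d.head? = some [Symbol.nonterminal g.initial] ∧
  d.getLast? = some (w.map Symbol.terminal) ∧
  d.Chain' (LeftmostStep g)

/-- A grammar is unambiguous if every word of its language has exactly one
leftmost derivation. -/
def Unambiguous {T : Type*} (g : ContextFreeGrammar T) : Prop :=
  ∀ w ∈ g.language, ∃! d : List (List (Symbol T g.NT)), IsLeftmostDerivation g w d

/-! ### Algebraicity of solutions of polynomial systems -/

/-- The chain rule for a derivation applied to a polynomial expression. -/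
theorem derivation_aeval {K E M ι : Type*} [CommRing K] [CommRing E] [Algebra K E]
    [AddCommGroup M] [Module E M] [Module K M] [IsScalarTower K E M] [Fintype ι] [DecidableEq ι]
    (D : Derivation K E M) (f : ι → E) (p : MvPolynomial ι K) :
    D (MvPolynomial.aeval f p) =
      ∑ j, MvPolynomial.aeval f (MvPolynomial.pderiv j p) • D (f j) := by
  induction p using MvPolynomial.induction_on with
  | C a => simp
  | add p q hp hq => simp [hp, hq, add_smul, Finset.sum_add_distrib]
  | mul_X p i hp =>
    simp only [map_mul, MvPolynomial.aeval_X, Derivation.leibniz, hp, MvPolynomial.pderiv_X,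
      smul_eq_mul, map_add, add_smul, Finset.sum_add_distrib, Finset.smul_sum, smul_smul]
    congr 1
    simp [Pi.single_apply, apply_ite (MvPolynomial.aeval f), ite_smul]

/-- Jacobian criterion over a field: a solution of `y = P(y)` with `1 - J` nonsingular, where `J` is
the Jacobian matrix of `P` at the solution, has algebraic coordinates. -/
theorem isAlgebraic_of_field_system {K L ι : Type} [Field K] [Field L] [Algebra K L] [CharZero K]
    [Fintype ι] [DecidableEq ι] (f : ι → L) (P : ι → MvPolynomial ι K)
    (hP : ∀ i, MvPolynomial.aeval f (P i) = f i)
    (hdet : (1 - Matrix.of fun i j =>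
      MvPolynomial.aeval f (MvPolynomial.pderiv j (P i))).det ≠ 0) (i : ι) :
    IsAlgebraic K (f i) := by
  let E := IntermediateField.adjoin K (Set.range f)
  let f' : ι → E := fun i => ⟨f i, IntermediateField.subset_adjoin K _ ⟨i, rfl⟩⟩
  have hval (p : MvPolynomial ι K) :
      ((MvPolynomial.aeval f' p : E) : L) = MvPolynomial.aeval f p := by
    change E.val (MvPolynomial.aeval f' p) = _
    exact DFunLike.congr_fun (MvPolynomial.comp_aeval f' E.val) p
  have hP' (i) : MvPolynomial.aeval f' (P i) = f' i := Subtype.ext (by rw [hval, hP])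
  let J : Matrix ι ι E := Matrix.of fun i j => MvPolynomial.aeval f' (MvPolynomial.pderiv j (P i))
  have hJ : (1 - J).det ≠ 0 := by
    intro h
    apply hdet
    have := congrArg E.val h
    rw [AlgHom.map_det, map_zero] at this
    rw [← this]
    congr 1
    ext i j
    simp [J, Matrix.one_apply, hval, apply_ite Subtype.val]
  -- The vector of differentials `d f'` satisfies `(1 - J) (d f') = 0`; test against functionals `φ`.
  have hv (i : ι) : KaehlerDifferential.D K E (f' i) = 0 := by
    rw [← Module.forall_dual_apply_eq_zero_iff E]
    intro φ
    have h0 : (1 - J).mulVec (fun i => φ (KaehlerDifferential.D K E (f' i))) = 0 := by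
      ext i
      have := derivation_aeval (KaehlerDifferential.D K E) f' (P i)
      rw [hP'] at this
      have := congrArg φ this
      simp only [map_sum, map_smul, smul_eq_mul] at this
      rw [Matrix.sub_mulVec, Matrix.one_mulVec, Pi.sub_apply, this]
      exact sub_self _
    exact congrFun (Matrix.eq_zero_of_mulVec_eq_zero hJ h0) i
  have hD (x : E) : KaehlerDifferential.D K E x = 0 := by
    obtain ⟨x, hx⟩ := x
    induction hx using IntermediateField.adjoin_induction with
    | mem x hx => obtain ⟨i, rfl⟩ := hx; exact hv i
    | algebraMap x => exact (KaehlerDifferential.D K E).map_algebraMap x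
    | add x y hx hy h1 h2 =>
      have := (KaehlerDifferential.D K E).map_add ⟨x, hx⟩ ⟨y, hy⟩
      rw [h1, h2, add_zero] at this
      exact this
    | inv x hx h =>
      have := (KaehlerDifferential.D K E).leibniz_inv ⟨x, hx⟩
      rw [h, smul_zero] at this
      exact this
    | mul x y hx hy h1 h2 =>
      have := (KaehlerDifferential.D K E).leibniz ⟨x, hx⟩ ⟨y, hy⟩
      rw [h1, h2, smul_zero, smul_zero, add_zero] at this
      exact this
  have : Algebra.EssFiniteType K E := by
    rw [IntermediateField.essFiniteType_iff]
    classical exact ⟨Finset.univ.image f, by simp [E]⟩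
  have : Algebra.FormallyUnramified K E := by
    constructor
    rw [← Submodule.subsingleton_iff E, ← subsingleton_iff_bot_eq_top, eq_comm,
      ← KaehlerDifferential.span_range_derivation, Submodule.span_eq_bot]
    rintro _ ⟨x, rfl⟩
    exact hD x
  have : Algebra.IsSeparable K E := (Algebra.FormallyUnramified.iff_isSeparable K E).1 this
  exact (IntermediateField.isAlgebraic_iff (x := f' i)).1 (Algebra.IsAlgebraic.isAlgebraic _)

/-- The Jacobian criterion over integral domains, by passage to the fraction fields. -/
theorem isAlgebraic_of_system {R B ι : Type} [CommRing R] [IsDomain R] [CharZero R] [CommRing B]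
    [IsDomain B] [Algebra R B] [FaithfulSMul R B]
    [Fintype ι] [DecidableEq ι] (f : ι → B) (P : ι → MvPolynomial ι R)
    (hP : ∀ i, MvPolynomial.aeval f (P i) = f i)
    (hdet : (1 - Matrix.of fun i j =>
      MvPolynomial.aeval f (MvPolynomial.pderiv j (P i))).det ≠ 0) (i : ι) :
    IsAlgebraic R (f i) := by
  let K := FractionRing R
  let L := FractionRing B
  let : Algebra K L := FractionRing.liftAlgebra R L
  have : IsScalarTower R K L := FractionRing.isScalarTower_liftAlgebra R L
  have hmap (p : MvPolynomial ι R) :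
      MvPolynomial.aeval (fun i => algebraMap B L (f i)) (MvPolynomial.map (algebraMap R K) p)
        = algebraMap B L (MvPolynomial.aeval f p) := by
    rw [MvPolynomial.aeval_map_algebraMap]
    exact MvPolynomial.aeval_algebraMap_apply L f p
  have : CharZero K := charZero_of_injective_algebraMap (IsFractionRing.injective R K)
  have h := isAlgebraic_of_field_system (K := K) (fun i => algebraMap B L (f i))
    (fun i => MvPolynomial.map (algebraMap R K) (P i)) (fun i => by rw [hmap, hP]) (by
      intro h
      apply hdet
      apply IsFractionRing.injective B L
      rw [map_zero, ← h, RingHom.map_det]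
      congr 1
      ext i j
      simp only [MvPolynomial.pderiv_map, hmap, RingHom.mapMatrix_apply, Matrix.map_apply,
        Matrix.sub_apply, Matrix.one_apply, Matrix.of_apply, map_sub]
      split_ifs <;> simp) i
  rw [← IsFractionRing.isAlgebraic_iff R K L] at h
  exact (isAlgebraic_algebraMap_iff (IsFractionRing.injective B L)).1 h

/-! ### Specialization of the step marker -/

open Polynomial in
theorem algebraMap_polynomial_powerSeries_injective :
    Function.Injective (algebraMap ℚ[X][X] (PowerSeries ℚ[X])) := by
  intro p q h
  apply Polynomial.coe_injective ℚ[X]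
  simpa [PowerSeries.algebraMap_apply'] using h

open Polynomial in
instance faithfulSMul_polynomial_powerSeries :
    FaithfulSMul ℚ[X][X] (PowerSeries ℚ[X]) :=
  (faithfulSMul_iff_algebraMap_injective _ _).2 algebraMap_polynomial_powerSeries_injective

open Polynomial in
/-- The embedding `ℚ[x]⟦t⟧ → ℚ⟦t⟧⟦x⟧` that exchanges the order of the two variables. -/
noncomputable def swapVars : (PowerSeries ℚ[X]) →+* PowerSeries (PowerSeries ℚ) where
  toFun F := PowerSeries.mk fun n => PowerSeries.mk fun m => (PowerSeries.coeff m F).coeff n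
  map_one' := by
    ext n m
    simp only [PowerSeries.coeff_mk, PowerSeries.coeff_one]
    split_ifs <;> simp_all [Polynomial.coeff_one, PowerSeries.coeff_one]
  map_zero' := by ext; simp
  map_add' F G := by ext; simp
  map_mul' F G := by
    ext n m
    simp only [PowerSeries.coeff_mk, PowerSeries.coeff_mul, Polynomial.coeff_mul,
      Polynomial.finsetSum_coeff, map_sum]
    exact Finset.sum_comm

open Polynomial in
/-- Setting `t = 1`: `F ∈ ℚ[x]⟦t⟧` and `G ∈ ℚ[t]⟦x⟧` have the same coefficients. If `F` is algebraic
over `ℚ[x][t]`, then the series `G|_{t = 1} ∈ ℚ⟦x⟧` is algebraic over `ℚ[x]`. -/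
theorem exists_annihilator_of_specialization (F G : PowerSeries ℚ[X]) (hF : IsAlgebraic ℚ[X][X] F)
    (hG : ∀ n m, (PowerSeries.coeff n G).coeff m = (PowerSeries.coeff m F).coeff n) :
    ∃ Q : ℚ[X][X], Q ≠ 0 ∧
      Polynomial.eval₂ Polynomial.coeToPowerSeries.ringHom
        (PowerSeries.map (evalRingHom 1) G) Q = 0 := by
  let : NormalizedGCDMonoid ℚ[X][X] := UniqueFactorizationMonoid.toNormalizedGCDMonoid _
  obtain ⟨p, hp0, hp⟩ := hF
  have hp' := aeval_primPart_eq_zero hp0 hp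
  refine ⟨p.primPart.map (evalRingHom 1), fun h => ?_, ?_⟩
  -- A primitive polynomial is not divisible by the nonunit constant `t - 1`.
  · refine not_isUnit_X_sub_C (1 : ℚ[X]) (p.isPrimitive_primPart _ ?_)
    rw [C_dvd_iff_dvd_coeff]
    intro i
    rw [dvd_iff_isRoot]
    simpa using congrArg (coeff · i) h
  -- `φ` embeds `ℚ[x][t]` into `ℚ[t]⟦x⟧`, and `ι` embeds `ℚ[t]⟦x⟧` into `ℚ⟦t⟧⟦x⟧`. The relation for `F`
  -- holds in the last ring, hence for `G` in `ℚ[t]⟦x⟧`, where `t = 1` may be substituted.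
  · let φ : ℚ[X][X] →+* (PowerSeries ℚ[X]) :=
      eval₂RingHom (eval₂RingHom (PowerSeries.C.comp C) PowerSeries.X) (PowerSeries.C X)
    let ι : (PowerSeries ℚ[X]) →+* PowerSeries (PowerSeries ℚ) := PowerSeries.map coeToPowerSeries.ringHom
    have hφ : swapVars.comp (algebraMap ℚ[X][X] (PowerSeries ℚ[X])) = ι.comp φ := by
      refine Polynomial.ringHom_ext' (Polynomial.ringHom_ext' (Subsingleton.elim _ _) ?_) ?_ <;> ext n m
      · simp [swapVars, ι, φ, PowerSeries.coeff_X, PowerSeries.coeff_C,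
          PowerSeries.algebraMap_apply']
        split_ifs <;> simp_all [Polynomial.coeff_X, PowerSeries.coeff_one, eq_comm]
      · simp [swapVars, ι, φ, PowerSeries.coeff_X, PowerSeries.coeff_C,
          PowerSeries.algebraMap_apply']
        split_ifs <;> simp_all [Polynomial.coeff_one, PowerSeries.coeff_X]
    have hι : Function.Injective ι := by
      apply PowerSeries.map_injective
      exact Polynomial.coe_injective ℚ
    have hFG : swapVars F = ι G := by
      ext n m
      simp [swapVars, ι, hG]
    have h1 : eval₂ φ G p.primPart = 0 := by
      apply hι
      rw [hom_eval₂, ← hφ, ← hFG, ← hom_eval₂, map_zero]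
      rw [aeval_def] at hp'
      rw [hp', map_zero]
    have h2 : (PowerSeries.map (evalRingHom 1)).comp φ =
        coeToPowerSeries.ringHom.comp (evalRingHom (1 : ℚ[X])) := by
      refine Polynomial.ringHom_ext' (Polynomial.ringHom_ext' (Subsingleton.elim _ _) ?_) ?_ <;> simp [φ]
    rw [eval₂_map, ← h2, ← hom_eval₂, h1, map_zero]

theorem det_one_sub_ne_zero {R ι : Type*} [CommRing R] [Nontrivial R] [Fintype ι] [DecidableEq ι]
    (M : Matrix ι ι (PowerSeries R)) (hM : ∀ i j, PowerSeries.constantCoeff (M i j) = 0) :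
    (1 - M).det ≠ 0 := by
  intro h
  have h1 := congrArg PowerSeries.constantCoeff h
  have h2 : (PowerSeries.constantCoeff (R := R)).mapMatrix (1 - M) = 1 := by
    ext i j
    simp [hM, Matrix.one_apply, apply_ite PowerSeries.constantCoeff]
  rw [RingHom.map_det, h2, Matrix.det_one, map_zero] at h1
  exact one_ne_zero h1

/-! ### Generating functions of leftmost derivations -/

section
variable {T : Type*}

open Polynomial Classical in
/-- The polynomial whose `x ^ n`-coefficient counts the leftmost derivations with exactly `m` steps
from the given sentential form to words of length `n`. Leading terminals are stripped, contributing
a factor `x`; a leading nonterminal is rewritten in all possible ways. -/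
noncomputable def stepPoly (g : ContextFreeGrammar T) : ℕ → List (Symbol T g.NT) → ℚ[X]
  | m, [] => if m = 0 then 1 else 0
  | m, .terminal _ :: β => X * stepPoly g m β
  | 0, .nonterminal _ :: _ => 0
  | m + 1, .nonterminal A :: β =>
      ∑ r ∈ g.rules, if r.input = A then stepPoly g m (r.output ++ β) else 0
  termination_by m α => (m, α.length)

open Polynomial in
/-- The generating function `F_α` of leftmost derivations from `α`. The power series variable `t` marks
steps, the polynomial variable `x` marks the length of the derived word. -/
noncomputable def derivSeries (g : ContextFreeGrammar T) (α : List (Symbol T g.NT)) : PowerSeries ℚ[X] :=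
  PowerSeries.mk fun m => stepPoly g m α

section
open Polynomial
variable (g : ContextFreeGrammar T)

theorem derivSeries_nil : derivSeries g [] = 1 := by
  ext m : 1
  simp [derivSeries, stepPoly, PowerSeries.coeff_one]

theorem derivSeries_terminal (a : T) (β : List (Symbol T g.NT)) :
    derivSeries g (.terminal a :: β) = PowerSeries.C X * derivSeries g β := by
  ext m : 1
  simp [derivSeries, stepPoly]

open Classical in
theorem derivSeries_nonterminal (A : g.NT) (β : List (Symbol T g.NT)) :
    derivSeries g (.nonterminal A :: β) = PowerSeries.X *
      ∑ r ∈ g.rules, if r.input = A then derivSeries g (r.output ++ β) else 0 := by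
  ext m : 1
  cases m with
  | zero => simp [derivSeries, stepPoly]
  | succ m =>
    rw [PowerSeries.coeff_succ_X_mul, map_sum, derivSeries, PowerSeries.coeff_mk, stepPoly]
    refine Finset.sum_congr rfl fun r _ => ?_
    split_ifs <;> simp [derivSeries]

/-- A leftmost derivation from `αβ` is one from `α` followed by one from `β`; here by induction on the
number of steps, and for a fixed number of steps on the length of `α`. -/
theorem derivSeries_append (α β : List (Symbol T g.NT)) :
    derivSeries g (α ++ β) = derivSeries g α * derivSeries g β := by
  suffices h : ∀ m α, PowerSeries.coeff m (derivSeries g (α ++ β)) =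
      PowerSeries.coeff m (derivSeries g α * derivSeries g β) from PowerSeries.ext fun m => h m α
  intro m
  induction m with
  | zero =>
    intro α
    induction α with
    | nil => simp [derivSeries_nil]
    | cons σ α ih =>
      cases σ with
      | terminal a =>
        rw [List.cons_append, derivSeries_terminal, derivSeries_terminal, mul_assoc,
          PowerSeries.coeff_C_mul, PowerSeries.coeff_C_mul, ih]
      | nonterminal A =>
        simp [derivSeries_nonterminal]
  | succ m ihm =>
    intro α
    induction α with
    | nil => simp [derivSeries_nil]
    | cons σ α ih =>
      cases σ with
      | terminal a =>
        rw [List.cons_append, derivSeries_terminal, derivSeries_terminal, mul_assoc,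
          PowerSeries.coeff_C_mul, PowerSeries.coeff_C_mul, ih]
      | nonterminal A =>
        rw [List.cons_append, derivSeries_nonterminal, derivSeries_nonterminal, mul_assoc,
          PowerSeries.coeff_succ_X_mul, PowerSeries.coeff_succ_X_mul, Finset.sum_mul, map_sum,
          map_sum]
        refine Finset.sum_congr rfl fun r _ => ?_
        split_ifs
        · rw [← ihm, List.append_assoc]
        · simp

open Classical in
/-- The series `F_A` solve the system `y_A = t ∑_{A → γ} ∏_{σ ∈ γ} y_σ`. The type of nonterminals may be
infinite, so the unknowns are restricted to the left-hand sides of rules; `F_A = 0` otherwise. -/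
theorem isAlgebraic_derivSeries (A : g.NT) :
    IsAlgebraic ℚ[X][X] (derivSeries g [.nonterminal A]) := by
  by_cases hA : A ∈ g.rules.image ContextFreeRule.input
  swap
  · have : derivSeries g [.nonterminal A] = 0 := by
      rw [derivSeries_nonterminal, Finset.sum_eq_zero, mul_zero]
      intro r hr
      rw [if_neg]
      rintro rfl
      exact hA (Finset.mem_image_of_mem _ hr)
    rw [this]
    exact isAlgebraic_zero
  let ι : Type := {A // A ∈ g.rules.image ContextFreeRule.input}
  let f : ι → (PowerSeries ℚ[X]) := fun i => derivSeries g [.nonterminal i.1]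
  let symP : Symbol T g.NT → MvPolynomial ι ℚ[X][X] := fun σ => match σ with
    | .terminal _ => MvPolynomial.C (C X)
    | .nonterminal B => if h : B ∈ g.rules.image ContextFreeRule.input
        then MvPolynomial.X ⟨B, h⟩ else 0
  let Q : ι → MvPolynomial ι ℚ[X][X] := fun i =>
    ∑ r ∈ g.rules, if r.input = i.1 then (r.output.map symP).prod else 0
  have hsym (σ) : MvPolynomial.aeval f (symP σ) = derivSeries g [σ] := by
    cases σ with
    | terminal a =>
      simp [symP, derivSeries_terminal, derivSeries_nil, PowerSeries.algebraMap_apply']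
    | nonterminal B =>
      simp only [symP]
      split_ifs with h
      · simp [f]
      · rw [derivSeries_nonterminal, Finset.sum_eq_zero, mul_zero, map_zero]
        intro r hr
        rw [if_neg]
        rintro rfl
        exact h (Finset.mem_image_of_mem _ hr)
  have hprod (γ : List (Symbol T g.NT)) :
      MvPolynomial.aeval f (γ.map symP).prod = derivSeries g γ := by
    induction γ with
    | nil => simp [derivSeries_nil]
    | cons σ γ ih =>
      rw [List.map_cons, List.prod_cons, map_mul, hsym, ih, ← derivSeries_append]
      rfl
  have hX : algebraMap ℚ[X][X] (PowerSeries ℚ[X]) X = PowerSeries.X := by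
    simp [PowerSeries.algebraMap_apply']
  refine isAlgebraic_of_system f (fun i => MvPolynomial.C X * Q i) (fun i => ?_) ?_ ⟨A, hA⟩
  · change _ = derivSeries g [.nonterminal i.1]
    rw [map_mul, MvPolynomial.aeval_C, hX, map_sum, derivSeries_nonterminal]
    congr 1
    refine Finset.sum_congr rfl fun r _ => ?_
    split_ifs
    · rw [List.append_nil, hprod]
    · simp
  · refine det_one_sub_ne_zero _ fun i j => ?_
    simp [hX, Derivation.leibniz]
end

/-! ### Counting derivations of a single word -/

open Classical in
/-- The number of leftmost derivations of the word `w` from a sentential form with exactly `m` steps,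
by the same recursion as `stepPoly`. -/
noncomputable def derivCount (g : ContextFreeGrammar T) :
    ℕ → List (Symbol T g.NT) → List T → ℕ
  | m, [], w => if m = 0 ∧ w = [] then 1 else 0
  | _, .terminal _ :: _, [] => 0
  | m, .terminal a :: β, b :: w => if a = b then derivCount g m β w else 0
  | 0, .nonterminal _ :: _, _ => 0
  | m + 1, .nonterminal A :: β, w =>
      ∑ r ∈ g.rules, if r.input = A then derivCount g m (r.output ++ β) w else 0
  termination_by m α => (m, α.length)

section
variable {g : ContextFreeGrammar T}

theorem coeff_stepPoly [Fintype T] (m : ℕ) (α : List (Symbol T g.NT)) (n : ℕ) :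
    (stepPoly g m α).coeff n = ∑ v : Fin n → T, (derivCount g m α (List.ofFn v) : ℚ) := by
  classical
  fun_induction stepPoly g m α generalizing n with
  | case1 =>
    cases n <;> simp [derivCount, Polynomial.coeff_one]
  | case2 m => 
    cases n <;> simp_all [derivCount]
  | case3 m a β ih =>
    cases n with
    | zero => simp [derivCount]
    | succ n =>
      rw [Polynomial.coeff_X_mul, ih, ← (Fin.consEquiv fun _ => T).sum_comp,
        Fintype.sum_prod_type]
      simp [Fin.consEquiv, List.ofFn_succ, derivCount, apply_ite (Nat.cast (R := ℚ))]
  | case4 A β => simp [derivCount]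
  | case5 m A β ih =>
    simp only [Polynomial.finsetSum_coeff, derivCount, Nat.cast_sum]
    rw [Finset.sum_comm]
    refine Finset.sum_congr rfl fun r _ => ?_
    split_ifs with h
    · exact ih r n
    · simp

/-- `d` is a leftmost derivation of `w` that starts at an arbitrary sentential form `α`; for the start
symbol this is `IsLeftmostDerivation`. -/
def IsDerivationFrom (g : ContextFreeGrammar T) (α : List (Symbol T g.NT)) (w : List T)
    (d : List (List (Symbol T g.NT))) : Prop :=
  d.head? = some α ∧ d.getLast? = some (w.map Symbol.terminal) ∧ d.IsChain (LeftmostStep g)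

theorem IsDerivationFrom.refl (w : List T) :
    IsDerivationFrom g (w.map .terminal) w [w.map .terminal] := by
  simp [IsDerivationFrom]

theorem LeftmostStep.terminal_cons {α β : List (Symbol T g.NT)} (h : LeftmostStep g α β) (a : T) :
    LeftmostStep g (.terminal a :: α) (.terminal a :: β) := by
  obtain ⟨r, hr, u, v, rfl, rfl⟩ := h
  exact ⟨r, hr, a :: u, v, rfl, rfl⟩

theorem leftmostStep_head {r : ContextFreeRule T g.NT} (hr : r ∈ g.rules)
    (β : List (Symbol T g.NT)) :
    LeftmostStep g (.nonterminal r.input :: β) (r.output ++ β) :=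
  ⟨r, hr, [], β, rfl, rfl⟩

theorem IsDerivationFrom.terminal_cons {α : List (Symbol T g.NT)} {w : List T}
    {d : List (List (Symbol T g.NT))} (h : IsDerivationFrom g α w d) (a : T) :
    IsDerivationFrom g (.terminal a :: α) (a :: w) (d.map (.terminal a :: ·)) := by
  obtain ⟨h1, h2, h3⟩ := h
  refine ⟨by simp [h1], by simp [h2], ?_⟩
  rw [List.isChain_map]
  exact h3.imp fun _ _ h => h.terminal_cons a

theorem IsDerivationFrom.cons {α β : List (Symbol T g.NT)} {w : List T}
    {d : List (List (Symbol T g.NT))} (h : IsDerivationFrom g β w d) (hs : LeftmostStep g α β) :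
    IsDerivationFrom g α w (α :: d) := by
  obtain ⟨h1, h2, h3⟩ := h
  cases d with
  | nil => simp at h1
  | cons x d =>
    obtain rfl : x = β := by simpa using h1
    exact ⟨rfl, by simpa using h2, by simp [hs, h3]⟩

theorem exists_derivation_of_derivCount_pos (m : ℕ) (α : List (Symbol T g.NT)) (w : List T)
    (h : 0 < derivCount g m α w) : ∃ d, IsDerivationFrom g α w d ∧ d.length = m + 1 := by
  fun_induction derivCount g m α w with
  | case1 m w hmw =>
    obtain ⟨rfl, rfl⟩ := hmw
    exact ⟨_, .refl [], rfl⟩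
  | case4 m β a w ih =>
    obtain ⟨d, hd, hl⟩ := ih h
    exact ⟨_, hd.terminal_cons a, by simpa using hl⟩
  | case7 m A β w ih =>
    obtain ⟨r, hr, hpos⟩ := Finset.sum_pos_iff.1 h
    split_ifs at hpos with hA
    · obtain ⟨d, hd, hl⟩ := ih r hpos
      exact ⟨_, hd.cons (hA ▸ leftmostStep_head hr β), by simpa using hl⟩
    · simp at hpos
  | _ => simp at h

theorem derives_of_derivCount_pos (m : ℕ) (α : List (Symbol T g.NT)) (w : List T)
    (h : 0 < derivCount g m α w) : g.Derives α (w.map .terminal) := by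
  fun_induction derivCount g m α w with
  | case1 m w hmw =>
    obtain ⟨rfl, rfl⟩ := hmw
    exact .refl _
  | case4 m β a w ih => exact (ih h).append_left [.terminal a]
  | case7 m A β w ih =>
    obtain ⟨r, hr, hpos⟩ := Finset.sum_pos_iff.1 h
    split_ifs at hpos with hA
    · subst hA
      exact ContextFreeGrammar.Produces.trans_derives ⟨r, hr, .head β⟩ (ih r hpos)
    · simp at hpos
  | _ => simp at h

/-- Two distinct applicable rules, or two derivations after the same rule, give distinct
derivations; so uniqueness of the derivation bounds the count by one. -/
theorem derivCount_le_one (m : ℕ) (α : List (Symbol T g.NT)) (w : List T)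
    (h : ∀ d d', IsDerivationFrom g α w d → IsDerivationFrom g α w d' → d = d') :
    derivCount g m α w ≤ 1 := by
  fun_induction derivCount g m α w with
  | case4 m β a w ih =>
    refine ih fun d d' hd hd' => ?_
    have := h _ _ (hd.terminal_cons a) (hd'.terminal_cons a)
    exact List.map_injective_iff.2 (List.cons_injective) this
  | case7 m A β w ih =>
    by_cases hex : ∃ r ∈ g.rules, r.input = A ∧ 0 < derivCount g m (r.output ++ β) w
    · obtain ⟨r, hr, rfl, hpos⟩ := hex
      rw [Finset.sum_eq_single_of_mem r hr, if_pos rfl]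
      · refine ih r fun d d' hd hd' => ?_
        exact (List.cons.inj (h _ _ (hd.cons (leftmostStep_head hr β))
          (hd'.cons (leftmostStep_head hr β)))).2
      · intro r' hr' hne
        split_ifs with hin
        · by_contra h0
          obtain ⟨d, hd, -⟩ := exists_derivation_of_derivCount_pos _ _ _ hpos
          obtain ⟨d', hd', -⟩ := exists_derivation_of_derivCount_pos _ _ _ (Nat.pos_of_ne_zero h0)
          have := (List.cons.inj (h _ _ (hd.cons (leftmostStep_head hr β))
            (hd'.cons (hin ▸ leftmostStep_head hr' β)))).2
          subst this
          have := hd.1.symm.trans hd'.1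
          rw [Option.some_inj, List.append_left_inj] at this
          exact hne (ContextFreeRule.ext hin this.symm)
        · rfl
    · rw [Finset.sum_eq_zero]
      · exact zero_le_one
      · intro r hr
        split_ifs with hA
        · by_contra h0
          exact hex ⟨r, hr, hA, Nat.pos_of_ne_zero h0⟩
        · rfl
  | _ => simp

theorem derivCount_step_pos {m : ℕ} {α β : List (Symbol T g.NT)} {w : List T}
    (hs : LeftmostStep g α β) (h : 0 < derivCount g m β w) : 0 < derivCount g (m + 1) α w := by
  obtain ⟨r, hr, u, v, rfl, rfl⟩ := hs
  induction u generalizing w with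
  | nil =>
    simp only [List.map_nil, List.nil_append, List.cons_append, derivCount] at h ⊢
    exact Finset.sum_pos_iff.2 ⟨r, hr, by simpa using h⟩
  | cons a u ih =>
    cases w with
    | nil => simp [derivCount] at h
    | cons b w =>
      simp only [List.map_cons, List.cons_append, derivCount] at h ⊢
      split_ifs at h ⊢
      · exact ih h
      · simp at h

theorem derivCount_terminal_pos (w : List T) : 0 < derivCount g 0 (w.map .terminal) w := by
  induction w with
  | nil => simp [derivCount]
  | cons a w ih => simpa [derivCount] using ih

theorem exists_derivCount_pos {α : List (Symbol T g.NT)} {w : List T}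
    {d : List (List (Symbol T g.NT))} (h : IsDerivationFrom g α w d) :
    ∃ m, 0 < derivCount g m α w := by
  induction d generalizing α with
  | nil => simp [IsDerivationFrom] at h
  | cons x d ih =>
    obtain ⟨h1, h2, h3⟩ := h
    obtain rfl : x = α := by simpa using h1
    cases d with
    | nil =>
      obtain rfl : x = w.map .terminal := by simpa using h2
      exact ⟨0, derivCount_terminal_pos w⟩
    | cons y d =>
      rw [List.isChain_cons_cons] at h3
      obtain ⟨m, hm⟩ := ih (α := y) ⟨rfl, by simpa using h2, h3.2⟩
      exact ⟨m + 1, derivCount_step_pos h3.1 hm⟩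

open Classical in
/-- In an unambiguous grammar, a word `w` of the language has exactly one leftmost derivation over all
step counts; `μ w` is its number of steps. -/
theorem exists_derivCount_eq (hg : Unambiguous g) :
    ∃ μ : List T → ℕ, ∀ m w, derivCount g m [.nonterminal g.initial] w =
      if w ∈ g.language ∧ m = μ w then 1 else 0 := by
  have key (w : List T) : ∃ k, ∀ m, derivCount g m [.nonterminal g.initial] w =
      if w ∈ g.language ∧ m = k then 1 else 0 := by
    by_cases hw : w ∈ g.language
    · obtain ⟨d, hd, huniq⟩ := hg w hw
      obtain ⟨k, hk⟩ := exists_derivCount_pos (g := g) (α := [.nonterminal g.initial]) hd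
      have hlen (m) (hm : 0 < derivCount g m [.nonterminal g.initial] w) : d.length = m + 1 := by
        obtain ⟨d', hd', hl⟩ := exists_derivation_of_derivCount_pos _ _ _ hm
        rw [← huniq d' hd', hl]
      refine ⟨k, fun m => ?_⟩
      split_ifs with h
      · obtain rfl := h.2
        exact le_antisymm (derivCount_le_one _ _ _ fun d₁ d₂ h₁ h₂ =>
          (huniq d₁ h₁).trans (huniq d₂ h₂).symm) hk
      · by_contra h0
        have h1 := hlen k hk
        have h2 := hlen m (Nat.pos_of_ne_zero h0)
        exact h ⟨hw, by omega⟩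
    · refine ⟨0, fun m => ?_⟩
      rw [if_neg (fun h => hw h.1)]
      by_contra h0
      exact hw (derives_of_derivCount_pos _ _ _ (Nat.pos_of_ne_zero h0))
  choose μ hμ using key
  exact ⟨μ, fun m w => hμ w m⟩
end
end

/-- Chomsky–Schützenberger: the generating function of an unambiguous context-free
language over a finite alphabet is algebraic over ℚ(x). -/
theorem chomsky_schutzenberger {T : Type*} [Fintype T] (g : ContextFreeGrammar T)
    (hg : Unambiguous g) :
    ∃ Q : Polynomial (Polynomial ℚ), Q ≠ 0 ∧
      Polynomial.eval₂ Polynomial.coeToPowerSeries.ringHom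
        (PowerSeries.mk fun n =>
          (Nat.card {w : List T // w.length = n ∧ w ∈ g.language} : ℚ)) Q = 0 := by
  classical
  obtain ⟨μ, hμ⟩ := exists_derivCount_eq hg
  -- The generating function of the start symbol, read as a series in `x` with coefficients in `ℚ[t]`.
  let G : PowerSeries (Polynomial ℚ) := PowerSeries.mk fun n =>
    ∑ v : Fin n → T, if List.ofFn v ∈ g.language then Polynomial.X ^ μ (List.ofFn v) else 0
  obtain ⟨Q, hQ, h⟩ := exists_annihilator_of_specialization _ G
    (isAlgebraic_derivSeries g g.initial) (fun n m => by
      simp only [G, derivSeries, PowerSeries.coeff_mk, coeff_stepPoly, hμ,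
        Polynomial.finsetSum_coeff]
      refine Finset.sum_congr rfl fun v _ => ?_
      by_cases hv : List.ofFn v ∈ g.language <;> simp [hv, Polynomial.coeff_X_pow])
  refine ⟨Q, hQ, ?_⟩
  convert h using 2
  ext n
  have e : {w : List T // w.length = n ∧ w ∈ g.language} ≃
      {v : Fin n → T // List.ofFn v ∈ g.language} :=
    { toFun := fun w => ⟨fun i => w.1.get (i.cast w.2.1.symm), by
        obtain ⟨w, rfl, hw⟩ := w
        simpa using hw⟩
      invFun := fun v => ⟨List.ofFn v.1, by simp, v.2⟩
      left_inv := by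
        rintro ⟨w, rfl, hw⟩
        simp
      right_inv := by
        rintro ⟨v, hv⟩
        simp }
  simp only [G, PowerSeries.coeff_mk, PowerSeries.coeff_map, map_sum]
  rw [Nat.card_congr e, Nat.card_eq_fintype_card, Fintype.card_subtype,
    Finset.card_eq_sum_ones, Finset.sum_filter, Nat.cast_sum]
  refine Finset.sum_congr rfl fun v _ => ?_
  split_ifs <;> simp
end

section
/- Let Σ be any alphabet. For a nonempty list l = [w₁, …, w_m] of nonempty words over Σ define the language M(l) by M([w]) = {w} and M(w :: l') = {w}·({ε} ∪ M(l')) for l' nonempty, where · denotes concatenation of languages. Then M is injective: if l₁ and l₂ are nonempty lists of nonempty words with M(l₁) = M(l₂), then l₁ = l₂. (In other words, every distinct choice of the words w_i in the expression w₁(ε + w₂(ε + ⋯ (ε + w_m)⋯)) specifies a distinct language.) -/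
/-!
With `M [] = 0`, every word `u` of `M (w :: l)` is either `w` or `w ++ v` with `v ∈ M l`
(`mem_M_cons`). Hence the head `w` is the unique shortest word of `M (w :: l)`, a prefix of all the
others, so it can be read off the language: two heads giving the same language are prefixes of each
other. As the words in the list are nonempty, `M l` does not contain the empty word, so `M l` is
recovered as the set of nonempty `v` with `w ++ v ∈ M (w :: l)`, and the theorem follows by
induction on the list.
-/

/-- For a nonempty list `[w₁, …, w_m]` of words, the language denoted by the
expression `w₁(ε + w₂(ε + ⋯ (ε + w_m)⋯))`: `M [w] = {w}` and
`M (w :: l) = {w}·({ε} ∪ M l)` for nonempty `l`.  (On the empty list we set `M [] = ∅`.) -/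
def M {α : Type*} : List (List α) → Language α
  | [] => 0
  | [w] => {w}
  | w :: x :: l => {w} * (1 + M (x :: l))

theorem mem_M_cons {α : Type*} (w : List α) (l : List (List α)) (u : List α) :
    u ∈ M (w :: l) ↔ u = w ∨ ∃ v ∈ M l, u = w ++ v := by
  cases l with
  | nil =>
    have h0 : ∀ v : List α, v ∉ M ([] : List (List α)) := fun v => Language.notMem_zero v
    simp only [h0, false_and, exists_false, or_false]
    exact Iff.rfl
  | cons x l =>
    change u ∈ ({w} : Language α) * (1 + M (x :: l)) ↔ _
    rw [Language.mem_mul]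
    constructor
    · rintro ⟨a, ha, b, hb, rfl⟩
      obtain rfl : a = w := ha
      rcases (Language.mem_add _ _ _).1 hb with hb | hb
      · rw [Language.mem_one] at hb
        simp [hb]
      · exact Or.inr ⟨b, hb, rfl⟩
    · rintro (rfl | ⟨v, hv, rfl⟩)
      · exact ⟨u, rfl, [], (Language.mem_add _ _ _).2 (Or.inl Language.nil_mem_one), by simp⟩
      · exact ⟨w, rfl, v, (Language.mem_add _ _ _).2 (Or.inr hv), rfl⟩

theorem nil_notMem_M {α : Type*} (l : List (List α)) (hw : ∀ w ∈ l, w ≠ []) : [] ∉ M l := by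
  cases l with
  | nil => exact Language.notMem_zero _
  | cons w l =>
    have hne : w ≠ [] := hw w (by simp)
    rw [mem_M_cons]
    rintro (h | ⟨v, -, h⟩)
    · exact hne h.symm
    · exact hne (List.append_eq_nil_iff.1 h.symm).1

theorem head_prefix_of_mem_M {α : Type*} {w u : List α} {l : List (List α)}
    (hu : u ∈ M (w :: l)) : w <+: u := by
  rcases (mem_M_cons w l u).1 hu with rfl | ⟨v, -, rfl⟩
  · exact List.prefix_rfl
  · exact List.prefix_append w v

/-- The language of the tail is recovered from that of the whole list and its head. -/
theorem mem_M_tail_iff {α : Type*} (w : List α) (l : List (List α)) (hw : ∀ x ∈ l, x ≠ [])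
    (v : List α) : v ∈ M l ↔ v ≠ [] ∧ w ++ v ∈ M (w :: l) := by
  rw [mem_M_cons]
  constructor
  · intro hv
    exact ⟨fun h => nil_notMem_M l hw (h ▸ hv), Or.inr ⟨v, hv, rfl⟩⟩
  · rintro ⟨hne, h | ⟨v', hv', h⟩⟩
    · exact absurd (by simpa using h) hne
    · rwa [List.append_cancel_left h]

/-- Distinct choices of the nonempty words `w₁, …, w_m` in the expression
`w₁(ε + w₂(ε + ⋯ (ε + w_m)⋯))` specify distinct languages. -/
theorem M_injective {α : Type*} (l₁ l₂ : List (List α))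
    (h₁ : l₁ ≠ []) (h₂ : l₂ ≠ [])
    (hw₁ : ∀ w ∈ l₁, w ≠ []) (hw₂ : ∀ w ∈ l₂, w ≠ [])
    (h : M l₁ = M l₂) : l₁ = l₂ := by
  -- With `M [] = 0` the claim also holds for empty lists, and induction needs that case.
  clear h₁ h₂
  induction l₁ generalizing l₂ with
  | nil =>
    cases l₂ with
    | nil => rfl
    | cons w l =>
      have hmem : w ∈ M (w :: l) := (mem_M_cons w l w).2 (Or.inl rfl)
      rw [← h] at hmem
      exact absurd hmem (Language.notMem_zero w)
  | cons w l ih =>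
    cases l₂ with
    | nil =>
      have hmem : w ∈ M (w :: l) := (mem_M_cons w l w).2 (Or.inl rfl)
      rw [h] at hmem
      exact absurd hmem (Language.notMem_zero w)
    | cons w' l' =>
      have h1 : w' <+: w := head_prefix_of_mem_M (h ▸ (mem_M_cons w l w).2 (Or.inl rfl))
      have h2 : w <+: w' := head_prefix_of_mem_M (h ▸ (mem_M_cons w' l' w').2 (Or.inl rfl))
      obtain rfl : w = w' := h2.eq_of_length_le h1.length_le
      have hl : ∀ x ∈ l, x ≠ [] := fun x hx => hw₁ x (List.mem_cons_of_mem _ hx)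
      have hl' : ∀ x ∈ l', x ≠ [] := fun x hx => hw₂ x (List.mem_cons_of_mem _ hx)
      rw [ih l' hl hl']
      ext v
      rw [mem_M_tail_iff w l hl, mem_M_tail_iff w l' hl', h]
end

section
/- Fix k ≥ 1. For every n ≥ 1, the number a_{k,n} of k-ary trees with exactly n nodes satisfies n · a_{k,n} = C(kn, n−1), i.e., a_{k,n} = (1/n)·binomial(kn, n−1). -/
/-!
The count is carried out for forests. Let `F(m, n)` be the number of `m`-tuples of `k`-ary trees
with `n` nodes in total. Looking at the first tree of an `(m+1)`-tuple, either it is empty, and an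
`m`-tuple with as many nodes remains, or it is a node, and replacing it by its `k` subtrees gives a
`(k+m)`-tuple with one node fewer (`forestEquiv`). Hence
`F(m+1, n+1) = F(m, n+1) + F(k+m, n)`, and this recurrence yields
`(kn + m) F(m, n) = m C(kn + m, n)` by induction on `n` and then on `m` (`forest_count`).
A nonempty tree with `n+1` nodes is the same as a `k`-tuple with `n` nodes, so the theorem is
the case `m = k`.
-/

/-- A `k`-ary tree: either empty, or a node with an ordered `k`-tuple of children. -/
inductive KTree (k : ℕ) : Type
  | empty : KTree k
  | node : (Fin k → KTree k) → KTree k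

namespace KTree

/-- The number of nodes of a `k`-ary tree. -/
def nodes {k : ℕ} : KTree k → ℕ
  | .empty => 0
  | .node c => 1 + ∑ i : Fin k, nodes (c i)

/-- Whether a tree is the empty tree. -/
def isEmptyTree {k : ℕ} : KTree k → Bool
  | .empty => true
  | .node _ => false

/-- The number of leaves of a `k`-ary tree: a leaf is a node all of whose children
are empty. -/
def leaves {k : ℕ} : KTree k → ℕ
  | .empty => 0
  | .node c => if ∀ i : Fin k, isEmptyTree (c i) = true then 1 else ∑ i : Fin k, leaves (c i)

end KTree

namespace KTree

/-- The `m`-tuples of `k`-ary trees with `n` nodes in total. -/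
abbrev Forest (k m n : ℕ) : Type := {f : Fin m → KTree k // ∑ i, nodes (f i) = n}

/-- An `m`-tuple is extended by an empty first tree; a `(k+m)`-tuple is turned into an
`(m+1)`-tuple by grafting its first `k` trees onto a new root. -/
def graft {k m : ℕ} : (Fin m → KTree k) ⊕ (Fin (k + m) → KTree k) → (Fin (m + 1) → KTree k)
  | .inl g => Fin.cons empty g
  | .inr h => Fin.cons (node fun i => h (Fin.castAdd m i)) fun j => h (Fin.natAdd k j)

lemma graft_bijective {k m : ℕ} : Function.Bijective (graft (k := k) (m := m)) := by
  constructor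
  · rintro (g | g) (h | h) e
    · exact congrArg _ (Fin.cons_right_injective _ e)
    · exact absurd (congrFun e 0) (by simp [graft])
    · exact absurd (congrFun e 0) (by simp [graft])
    · obtain ⟨e₁, e₂⟩ := Fin.cons_inj.1 e
      have e₁' := node.inj e₁
      congr 1
      funext i
      refine Fin.addCases (fun i => congrFun e₁' i) (fun j => congrFun e₂ j) i
  · intro f
    rcases h : f 0 with _ | c
    · refine ⟨.inl (Fin.tail f), ?_⟩
      rw [graft, ← h, Fin.cons_self_tail]
    · refine ⟨.inr (Fin.append c (Fin.tail f)), ?_⟩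
      simp only [graft, Fin.append_left, Fin.append_right]
      rw [← h]
      exact Fin.cons_self_tail f

lemma sum_nodes_graft_inl {k m : ℕ} (g : Fin m → KTree k) :
    ∑ i, nodes (graft (.inl g) i) = ∑ i, nodes (g i) := by
  simp [graft, Fin.sum_univ_succ, nodes]

lemma sum_nodes_graft_inr {k m : ℕ} (h : Fin (k + m) → KTree k) :
    ∑ i, nodes (graft (.inr h) i) = ∑ i, nodes (h i) + 1 := by
  simp [graft, Fin.sum_univ_succ, nodes, Fin.sum_univ_add]
  ring

/-- The decomposition of a forest according to whether its first tree is empty. -/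
noncomputable def forestEquiv (k m n : ℕ) :
    Forest k m (n + 1) ⊕ Forest k (k + m) n ≃ Forest k (m + 1) (n + 1) :=
  ((Equiv.subtypeEquivRight fun g => by rw [sum_nodes_graft_inl]).sumCongr
    (Equiv.subtypeEquivRight fun h => by rw [sum_nodes_graft_inr, Nat.add_right_cancel_iff])).trans
  ((Equiv.subtypeSum (p := fun x => ∑ i, nodes (graft x i) = n + 1)).symm.trans
    ((Equiv.ofBijective graft graft_bijective).subtypeEquiv fun _ => Iff.rfl))

lemma eq_empty_of_nodes_eq_zero {k : ℕ} {t : KTree k} (h : nodes t = 0) : t = empty := by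
  cases t with
  | empty => rfl
  | node c => simp [nodes] at h

/-- The only forest without nodes consists of empty trees. -/
instance uniqueForestZero (k m : ℕ) : Unique (Forest k m 0) where
  default := ⟨fun _ => empty, by simp [nodes]⟩
  uniq f := Subtype.ext <| funext fun i =>
    eq_empty_of_nodes_eq_zero (Finset.sum_eq_zero_iff.1 f.2 i (Finset.mem_univ i))

instance isEmptyForestSucc (k n : ℕ) : IsEmpty (Forest k 0 (n + 1)) :=
  ⟨fun f => by simpa using f.2⟩

/-- Finiteness matters because `Nat.card` of an infinite type is `0`. -/
instance finiteForest (k m n : ℕ) : Finite (Forest k m n) := by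
  induction n generalizing m with
  | zero => infer_instance
  | succ n ihn =>
    induction m with
    | zero => infer_instance
    | succ m ihm =>
      have := ihn (k + m)
      exact Finite.of_equiv _ (forestEquiv k m n)

lemma card_forest_succ (k m n : ℕ) : Nat.card (Forest k (m + 1) (n + 1)) =
    Nat.card (Forest k m (n + 1)) + Nat.card (Forest k (k + m) n) := by
  rw [← Nat.card_congr (forestEquiv k m n), Nat.card_sum]

/-- The count of forests, in the division-free form of `F(m, n) = m / (kn + m) * C(kn + m, n)`. -/
theorem forest_count {k : ℕ} (hk : 1 ≤ k) (m n : ℕ) :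
    (k * n + m) * Nat.card (Forest k m n) = m * (k * n + m).choose n := by
  induction n generalizing m with
  | zero => simp
  | succ n ihn =>
    induction m with
    | zero => simp
    | succ m ihm =>
      rw [card_forest_succ]
      have h := ihn (k + m)
      rw [show k * n + (k + m) = k * (n + 1) + m by ring] at h
      rw [show k * (n + 1) + (m + 1) = k * (n + 1) + m + 1 by ring]
      have hpos : 0 < k * (n + 1) + m := by positivity
      have pascal := Nat.choose_succ_succ (k * (n + 1) + m) n
      have absorb := Nat.add_one_mul_choose_eq (k * (n + 1) + m) n
      simp only [Nat.succ_eq_add_one] at pascal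
      generalize hM : k * (n + 1) + m = M at *
      -- Both induction hypotheses carry the factor `M`, so the identity is proved after
      -- multiplication by it.
      refine Nat.eq_of_mul_eq_mul_left hpos ?_
      zify at *
      linear_combination (M + 1 : ℤ) * ihm + (M + 1 : ℤ) * h - (M + 1 : ℤ) * m * pascal
        + (k : ℤ) * absorb + ((M + 1).choose (n + 1) : ℤ) * hM

/-- Removing the root identifies trees with `n + 1` nodes and `k`-tuples with `n` nodes. -/
def treeEquiv (k n : ℕ) : {t : KTree k // nodes t = n + 1} ≃ Forest k k n where
  toFun
    | ⟨.empty, h⟩ => absurd h (by simp [nodes])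
    | ⟨.node c, h⟩ => ⟨c, by rw [nodes] at h; omega⟩
  invFun f := ⟨node f.1, by rw [nodes, f.2, add_comm]⟩
  left_inv
    | ⟨.empty, h⟩ => absurd h (by simp [nodes])
    | ⟨.node c, h⟩ => rfl
  right_inv _ := rfl

end KTree

/-- The number of `k`-ary trees with exactly `n` nodes is `(1/n)·C(kn, n-1)`;
equivalently, `n` times this number equals `C(kn, n-1)`. -/
theorem ktree_count (k : ℕ) (hk : 1 ≤ k) (n : ℕ) (hn : 1 ≤ n) :
    n * Nat.card {t : KTree k // KTree.nodes t = n} = Nat.choose (k * n) (n - 1) := by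
  obtain ⟨n, rfl⟩ := Nat.exists_eq_add_of_le' hn
  rw [Nat.card_congr (KTree.treeEquiv k n), Nat.add_sub_cancel]
  have h := KTree.forest_count hk k n
  refine Nat.eq_of_mul_eq_mul_left hk ?_
  rw [← mul_assoc, mul_add_one, h]
end

section
/- Fix k ≥ 1. For every n ≥ 1, the total number of leaf nodes summed over all k-ary trees with exactly n nodes equals binomial(k(n−1), n−1); that is, c_{k,n} = C(k(n−1), n−1). -/
namespace KTree

open PowerSeries

variable {k : ℕ}

lemma finite_nodes_le (k n : ℕ) : {t : KTree k | t.nodes ≤ n}.Finite := by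
  induction n with
  | zero =>
    refine (Set.finite_singleton KTree.empty).subset ?_
    rintro (_ | c) h
    · rfl
    · simp [nodes] at h
  | succ n ih =>
    refine ((Set.finite_singleton KTree.empty).union
      ((Set.Finite.pi' fun _ : Fin k => ih).image KTree.node)).subset ?_
    rintro (_ | c) h
    · exact Or.inl rfl
    · refine Or.inr ⟨c, fun i => ?_, rfl⟩
      have h1 : nodes (c i) ≤ ∑ j, nodes (c j) :=
        Finset.single_le_sum (f := fun j => nodes (c j)) (fun _ _ => Nat.zero_le _)
          (Finset.mem_univ i)
      simp only [Set.mem_ofPred_eq, nodes] at h ⊢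
      lia

lemma finite_nodes_eq (k n : ℕ) : {t : KTree k | t.nodes = n}.Finite :=
  (finite_nodes_le k n).subset fun _ h => le_of_eq h

lemma finite_forest (k n : ℕ) : {c : Fin k → KTree k | ∑ i, nodes (c i) = n}.Finite := by
  refine (Set.Finite.preimage (f := KTree.node) (fun a _ b _ h => by simpa using h)
    (finite_nodes_eq k (n + 1))).subset ?_
  intro c h
  simp only [Set.mem_ofPred_eq, Set.mem_preimage, nodes] at h ⊢
  lia

/-- The finite set of `k`-ary trees with `n` nodes. -/
noncomputable def trees (k n : ℕ) : Finset (KTree k) := (finite_nodes_eq k n).toFinset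

/-- The finite set of `k`-tuples of `k`-ary trees with `n` nodes in total. -/
noncomputable def forests (k n : ℕ) : Finset (Fin k → KTree k) := (finite_forest k n).toFinset

@[simp] lemma mem_trees {n : ℕ} {t : KTree k} : t ∈ trees k n ↔ t.nodes = n := by
  simp [trees]

@[simp] lemma mem_forests {n : ℕ} {c : Fin k → KTree k} :
    c ∈ forests k n ↔ ∑ i, nodes (c i) = n := by
  simp [forests]

lemma trees_zero : trees k 0 = {KTree.empty} := by
  ext t
  cases t <;> simp [nodes]

lemma sum_trees_succ (n : ℕ) (g : KTree k → ℕ) :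
    ∑ t ∈ trees k (n + 1), g t = ∑ c ∈ forests k n, g (.node c) := by
  symm
  refine Finset.sum_bij (fun c _ => .node c) ?_ ?_ ?_ fun _ _ => rfl
  · intro c h
    simp only [mem_forests, mem_trees, nodes] at h ⊢
    lia
  · intro a _ b _ h
    simpa using h
  · rintro (_ | c) h
    · simp [nodes] at h
    · refine ⟨c, ?_, rfl⟩
      simp only [mem_forests, mem_trees, nodes] at h ⊢
      lia

/-- The generating function, by number of nodes, of `k`-ary trees weighted by `w`. -/
noncomputable def genFun (w : KTree k → ℕ) : PowerSeries ℕ :=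
  PowerSeries.mk fun n => ∑ t ∈ trees k n, w t

/-- Product formula: the weight of a `k`-tuple of trees is the product of the weights. -/
lemma coeff_prod_genFun (w : Fin k → KTree k → ℕ) (n : ℕ) :
    coeff n (∏ i, genFun (w i)) = ∑ c ∈ forests k n, ∏ i, w i (c i) := by
  classical
  rw [PowerSeries.coeff_prod]
  simp only [genFun, coeff_mk, Finset.prod_univ_sum]
  rw [Finset.sum_sigma']
  refine Finset.sum_bij' (fun x _ => x.2)
    (fun c _ => ⟨Finsupp.equivFunOnFinite.symm fun i => nodes (c i), c⟩) ?_ ?_ ?_ ?_ ?_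
  · rintro ⟨v, c⟩ h
    simp only [Finset.mem_sigma, Finset.mem_finsuppAntidiag, Fintype.mem_piFinset, mem_trees,
      mem_forests] at h ⊢
    simp only [h.2, h.1.1]
  · intro c h
    simpa using h
  · rintro ⟨v, c⟩ h
    simp only [Finset.mem_sigma, Fintype.mem_piFinset, mem_trees] at h
    have hv : (Finsupp.equivFunOnFinite.symm fun i => nodes (c i)) = v := by
      ext i
      simp [h.2 i]
    simp [hv]
  · intro c _
    rfl
  · intro x _
    rfl

/-- The generating function of `k`-ary trees by number of nodes. -/
noncomputable def treeSeries (k : ℕ) : PowerSeries ℕ := genFun (k := k) fun _ => 1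

/-- The generating function of the total number of leaves, divided by `X`: its coefficient at `n`
is the number of leaves over all trees with `n + 1` nodes. -/
noncomputable def leafSeries (k : ℕ) : PowerSeries ℕ :=
  PowerSeries.mk fun n => ∑ t ∈ trees k (n + 1), leaves t

lemma genFun_leaves : genFun (k := k) leaves = X * leafSeries k := by
  ext (_ | n)
  · simp [genFun, trees_zero, leaves]
  · simp [genFun, leafSeries, coeff_succ_X_mul]

lemma treeSeries_eq (k : ℕ) : treeSeries k = 1 + X * treeSeries k ^ k := by
  ext (_ | n)
  · simp [treeSeries, genFun, trees_zero]
  · have h := coeff_prod_genFun (k := k) (fun _ _ => 1) n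
    rw [Finset.prod_const, Finset.card_univ, Fintype.card_fin] at h
    rw [map_add, coeff_succ_X_mul, coeff_one, if_neg n.succ_ne_zero, zero_add, treeSeries, h,
      genFun, coeff_mk, sum_trees_succ]
    simp

/-- The children of the root account for all leaves, except in the one-node tree, whose root is
itself a leaf. -/
lemma leaves_node [DecidableEq (Fin k → KTree k)] (c : Fin k → KTree k) :
    leaves (.node c) = (∑ i, leaves (c i)) + if c = (fun _ => .empty) then 1 else 0 := by
  have he : ∀ t : KTree k, isEmptyTree t = true ↔ t = .empty := by
    rintro (_ | _) <;> simp [isEmptyTree]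
  by_cases h : ∀ i, c i = .empty
  · have h1 : ∀ i, isEmptyTree (c i) = true := fun i => (he _).2 (h i)
    rw [leaves, if_pos h1, if_pos (funext h)]
    simp [h, leaves]
  · have h1 : ¬ ∀ i, isEmptyTree (c i) = true := fun h1 => h fun i => (he _).1 (h1 i)
    rw [leaves, if_neg h1, if_neg fun h2 => h (congrFun h2), add_zero]

lemma leafSeries_eq (k : ℕ) :
    leafSeries k = 1 + X * ((k : PowerSeries ℕ) * (treeSeries k ^ (k - 1) * leafSeries k)) := by
  classical
  -- Weighting the `i`-th child by its leaves and the others by `1` turns the sum into a product.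
  have key (n : ℕ) (i : Fin k) : ∑ c ∈ forests k n, leaves (c i) =
      coeff n (X * (treeSeries k ^ (k - 1) * leafSeries k)) := by
    have h := coeff_prod_genFun (k := k) (fun j => if j = i then leaves else fun _ => 1) n
    have h1 (c : Fin k → KTree k) :
        ∏ j, (if j = i then leaves else fun _ => 1) (c j) = leaves (c i) := by
      rw [Finset.prod_eq_single i] <;> simp +contextual
    simp only [h1] at h
    rw [← h, ← Finset.mul_prod_erase _ _ (Finset.mem_univ i)]
    have h2 : ∏ j ∈ Finset.univ.erase i,
        genFun (k := k) (if j = i then leaves else fun _ => 1) = treeSeries k ^ (k - 1) := by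
      rw [Finset.prod_congr rfl (g := fun _ => treeSeries k), Finset.prod_const,
        Finset.card_erase_of_mem (Finset.mem_univ i), Finset.card_univ, Fintype.card_fin]
      intro j hj
      rw [if_neg (Finset.ne_of_mem_erase hj), treeSeries]
    rw [h2, if_pos rfl, genFun_leaves]
    congr 1
    ring
  ext n
  have hX : X * ((k : PowerSeries ℕ) * (treeSeries k ^ (k - 1) * leafSeries k)) =
      k • (X * (treeSeries k ^ (k - 1) * leafSeries k)) := by
    rw [nsmul_eq_mul]
    ring
  rw [hX, map_add, map_nsmul]
  conv_lhs => rw [leafSeries, coeff_mk, sum_trees_succ]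
  simp only [leaves_node]
  rw [Finset.sum_add_distrib, Finset.sum_comm]
  simp only [key]
  rw [Finset.sum_ite_eq']
  simp [nodes, coeff_one, add_comm, eq_comm]

/-- The generalization of the theorem on which the double induction runs: Pascal's rule in the
step on `a`, the absorption identity at `a = 0`. -/
theorem coeff_treeSeries_pow_mul_leafSeries (hk : 1 ≤ k) (m a : ℕ) :
    coeff m (treeSeries k ^ a * leafSeries k) = (k * m + a).choose m := by
  induction m generalizing a with
  | zero =>
    have hT : constantCoeff (treeSeries k) = 1 := by rw [treeSeries_eq]; simp
    have hS : constantCoeff (leafSeries k) = 1 := by rw [leafSeries_eq]; simp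
    simp [hT, hS]
  | succ m ihm =>
    induction a with
    | zero =>
      rw [pow_zero, one_mul, leafSeries_eq, map_add, coeff_succ_X_mul, coeff_one,
        if_neg m.succ_ne_zero, zero_add, ← nsmul_eq_mul, map_nsmul, ihm, smul_eq_mul]
      obtain ⟨j, rfl⟩ : ∃ j, k = j + 1 := ⟨k - 1, by lia⟩
      have h := Nat.add_one_mul_choose_eq ((j + 1) * m + j) m
      have e : (j + 1) * (m + 1) + 0 = (j + 1) * m + j + 1 := by ring
      rw [e, Nat.add_sub_cancel]
      apply Nat.eq_of_mul_eq_mul_right m.succ_pos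
      rw [Nat.succ_eq_add_one, ← h]
      ring
    | succ a iha =>
      have e : treeSeries k ^ (a + 1) * leafSeries k =
          treeSeries k ^ a * leafSeries k + X * (treeSeries k ^ (a + k) * leafSeries k) := by
        calc treeSeries k ^ (a + 1) * leafSeries k
            = treeSeries k ^ a * (1 + X * treeSeries k ^ k) * leafSeries k := by
              rw [← treeSeries_eq, pow_succ]
          _ = _ := by ring
      rw [e, map_add, coeff_succ_X_mul, iha, ihm]
      have e1 : k * m + (a + k) = k * (m + 1) + a := by ring
      rw [e1, ← add_assoc, Nat.choose_succ_succ', add_comm]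

end KTree

/-- The total number of leaves, summed over all `k`-ary trees with exactly `n` nodes,
equals `C(k(n-1), n-1)`. -/
theorem ktree_leaf_count (k : ℕ) (hk : 1 ≤ k) (n : ℕ) (hn : 1 ≤ n) :
    ∑ᶠ t ∈ {t : KTree k | KTree.nodes t = n}, KTree.leaves t =
      Nat.choose (k * (n - 1)) (n - 1) := by
  classical
  obtain ⟨m, rfl⟩ : ∃ m, n = m + 1 := ⟨n - 1, by lia⟩
  have h := KTree.coeff_treeSeries_pow_mul_leafSeries hk m 0
  rw [pow_zero, one_mul, KTree.leafSeries, PowerSeries.coeff_mk] at h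
  rw [finsum_mem_eq_finite_toFinset_sum _ (KTree.finite_nodes_eq k (m + 1))]
  exact h
end

section
/- Fix an alphabet Σ of size k ≥ 2. There exist a constant c > 0 and N ∈ ℕ such that for all n ≥ N, the number of distinct languages L(E), where E ranges over star-free regular expressions over Σ of alphabetic width exactly n, is at least c · (2^{1−1/e} · k^k / (k−1)^{k−1})^n. -/
/-- A regular expression is star-free if it contains no Kleene star. -/
def IsStarFree {α : Type*} : RegularExpression α → Prop
  | RegularExpression.zero => True
  | RegularExpression.epsilon => True
  | RegularExpression.char _ => True
  | RegularExpression.plus F G => IsStarFree F ∧ IsStarFree G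
  | RegularExpression.comp F G => IsStarFree F ∧ IsStarFree G
  | RegularExpression.star _ => False

namespace StarFreeCount

/-! ### Languages as tries -/

/-- The trie with a root, whose acceptance bit is `b`, and with the subtrie `f a` hanging from the
root by an edge labelled `a`. Empty `f a` stand for missing children. -/
def build {k : ℕ} (b : Bool) (f : Fin k → Language (Fin k)) : Language (Fin k) :=
  {w | match w with
    | [] => b = true
    | a :: t => t ∈ f a}

/-- The prefixes of the words of `L`, i.e. the nodes of the trie of `L`. -/
def pre {k : ℕ} (L : Language (Fin k)) : Set (List (Fin k)) := {p | ∃ s, p ++ s ∈ L}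

/-- The number of nodes of the trie of `L` (junk value `0` if the trie is infinite). -/
noncomputable def size {k : ℕ} (L : Language (Fin k)) : ℕ := (pre L).ncard

/-- The languages whose trie is finite and has exactly `n` nodes. -/
def tries (k n : ℕ) : Set (Language (Fin k)) := {L | (pre L).Finite ∧ size L = n}

variable {k : ℕ}

@[simp] lemma nil_mem_build (b : Bool) (f : Fin k → Language (Fin k)) :
    [] ∈ build b f ↔ b = true := Iff.rfl

@[simp] lemma cons_mem_build (b : Bool) (f : Fin k → Language (Fin k)) (a : Fin k)
    (t : List (Fin k)) : a :: t ∈ build b f ↔ t ∈ f a := Iff.rfl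

lemma exists_build (L : Language (Fin k)) : ∃ b f, L = build b f := by
  classical
  refine ⟨decide ([] ∈ L), fun a => ({t | a :: t ∈ L} : Set (List (Fin k))), ?_⟩
  ext w
  cases w with
  | nil => exact (decide_eq_true_iff (p := [] ∈ L)).symm
  | cons a t => exact Iff.rfl

lemma build_injective {b b' : Bool} {f f' : Fin k → Language (Fin k)}
    (h : build b f = build b' f') : b = b' ∧ f = f' := by
  constructor
  · have : ([] ∈ build b f) ↔ ([] ∈ build b' f') := by rw [h]
    exact Bool.eq_iff_iff.2 this
  · funext a
    ext t
    have : (a :: t ∈ build b f) ↔ (a :: t ∈ build b' f') := by rw [h]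
    simpa using this

lemma build_false_zero : build false (fun _ : Fin k => (0 : Language (Fin k))) = 0 := by
  ext w
  cases w with
  | nil => simp [Language.notMem_zero]
  | cons a t => simp [Language.notMem_zero]

lemma eq_zero_of_forall {L : Language (Fin k)} (h : ∀ w, w ∉ L) : L = 0 := by
  ext w
  simp [h w, Language.notMem_zero]

@[simp] lemma pre_zero : pre (0 : Language (Fin k)) = ∅ := by
  ext p
  simp [pre, Language.notMem_zero]

@[simp] lemma size_zero : size (0 : Language (Fin k)) = 0 := by simp [size]

lemma eq_zero_of_pre_eq_empty {L : Language (Fin k)} (h : pre L = ∅) : L = 0 := by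
  refine eq_zero_of_forall fun w hw => ?_
  have : w ∈ pre L := ⟨[], by simpa using hw⟩
  simp [h] at this

lemma pre_build {b : Bool} {f : Fin k → Language (Fin k)} (h : build b f ≠ 0) :
    pre (build b f) = insert [] (⋃ a, List.cons a '' pre (f a)) := by
  ext p
  cases p with
  | nil =>
    simp only [Set.mem_insert_iff, true_or, iff_true]
    by_contra hn
    exact h (eq_zero_of_forall fun w hw => hn ⟨w, by simpa using hw⟩)
  | cons a t => simp [pre]

lemma pre_child_finite {b : Bool} {f : Fin k → Language (Fin k)}
    (h : (pre (build b f)).Finite) (a : Fin k) : (pre (f a)).Finite := by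
  refine Set.Finite.of_finite_image (f := List.cons a) (h.subset ?_)
    (List.cons_injective.injOn)
  rintro _ ⟨t, ⟨s, hs⟩, rfl⟩
  exact ⟨s, by simpa using hs⟩

lemma pre_build_finite {b : Bool} {f : Fin k → Language (Fin k)}
    (h : ∀ a, (pre (f a)).Finite) : (pre (build b f)).Finite := by
  by_cases h0 : build b f = 0
  · simp [h0]
  · rw [pre_build h0]
    exact (Set.finite_iUnion fun a => (h a).image _).insert _

/-- A nonempty trie has one node more than its principal subtries have together. -/
lemma size_build {b : Bool} {f : Fin k → Language (Fin k)} (h : build b f ≠ 0)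
    (hf : ∀ a, (pre (f a)).Finite) : size (build b f) = (∑ a, size (f a)) + 1 := by
  have hfin : (⋃ a, List.cons a '' pre (f a)).Finite :=
    Set.finite_iUnion fun a => (hf a).image _
  rw [size, pre_build h, Set.ncard_insert_of_notMem (by simp) hfin,
    Set.ncard_iUnion_of_finite (fun a => (hf a).image _), finsum_eq_sum_of_fintype]
  · congr 1
    exact Finset.sum_congr rfl fun a _ => Set.ncard_image_of_injective _ List.cons_injective
  · intro a a' haa
    rw [Function.onFun, Set.disjoint_left]
    rintro _ ⟨t, _, rfl⟩ ⟨t', _, h'⟩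
    exact haa (List.cons.inj h').1.symm

/-! ### Star-free expressions for tries -/

/-- The languages denoted by star-free expressions of alphabetic width `n`. -/
def denoted (k n : ℕ) : Set (Language (Fin k)) :=
  {L | ∃ E : RegularExpression (Fin k), IsStarFree E ∧ alph E = n ∧ E.matches' = L}

lemma length_le_alph (E : RegularExpression (Fin k)) (hE : IsStarFree E) :
    ∀ w ∈ E.matches', w.length ≤ alph E := by
  induction E with
  | zero => intro w hw; exact absurd hw (Language.notMem_zero w)
  | epsilon => intro w hw; simp [(Language.mem_one w).1 hw]
  | char a =>
    intro w hw
    have : w = [a] := hw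
    simp [this, alph]
  | plus F G hF hG =>
    intro w hw
    rcases (Language.mem_add _ _ _).1 hw with h | h
    · exact (hF hE.1 w h).trans (Nat.le_add_right _ _)
    · exact (hG hE.2 w h).trans (Nat.le_add_left _ _)
  | comp F G hF hG =>
    intro w hw
    obtain ⟨u, hu, v, hv, rfl⟩ := Language.mem_mul.1 hw
    rw [List.length_append]
    exact Nat.add_le_add (hF hE.1 u hu) (hG hE.2 v hv)
  | star F _ => exact hE.elim

/-- Finiteness matters, since `Nat.card` of an infinite type is `0`. -/
lemma denoted_finite (k n : ℕ) : (denoted k n).Finite := by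
  have h : (𝒫 {w : List (Fin k) | w.length ≤ n}).Finite :=
    (List.finite_length_le (Fin k) n).finite_subsets
  refine h.subset ?_
  rintro L ⟨E, hE, rfl, rfl⟩
  exact fun w hw => length_le_alph E hE w hw

/-- A trie with `n` edges is denoted by an expression with one letter per edge. -/
lemma tries_subset_denoted (k n : ℕ) : tries k (n + 1) ⊆ denoted k n := by
  classical
  induction n using Nat.strong_induction_on with
  | _ n ih =>
  rintro L ⟨hfin, hsz⟩
  obtain ⟨b, f, rfl⟩ := exists_build L
  have h0 : build b f ≠ 0 := by
    intro h
    simp [h] at hsz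
  have hf := pre_child_finite hfin
  rw [size_build h0 hf, Nat.add_right_cancel_iff] at hsz
  have hchild : ∀ a, ∃ E : RegularExpression (Fin k), IsStarFree E ∧ alph E = size (f a) ∧
      ∀ w, w ∈ E.matches' ↔ ∃ t ∈ f a, w = a :: t := by
    intro a
    rcases Nat.eq_zero_or_pos (size (f a)) with hz | hp
    · have hz' : f a = 0 := eq_zero_of_pre_eq_empty ((Set.ncard_eq_zero (hf a)).1 hz)
      refine ⟨.zero, trivial, by simp [alph, hz], fun w => ?_⟩
      rw [hz']
      exact ⟨fun h => absurd h (Language.notMem_zero w),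
        fun ⟨t, ht, _⟩ => absurd ht (Language.notMem_zero t)⟩
    · have hle : size (f a) ≤ n := hsz ▸
        Finset.single_le_sum (f := fun a => size (f a)) (fun _ _ => Nat.zero_le _)
          (Finset.mem_univ a)
      obtain ⟨E, hE, hw, hm⟩ := ih (size (f a) - 1) (by omega)
        (show f a ∈ tries k (size (f a) - 1 + 1) from ⟨hf a, by omega⟩)
      refine ⟨.comp (.char a) E, ⟨trivial, hE⟩, by simp only [alph]; omega, fun w => ?_⟩
      have : (RegularExpression.comp (.char a) E).matches' = {[a]} * f a := by
        rw [← hm]; rfl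
      rw [this, Language.mem_mul]
      constructor
      · rintro ⟨u, hu, t, ht, rfl⟩
        have hu' : u = [a] := hu
        exact ⟨t, ht, by simp [hu']⟩
      · rintro ⟨t, ht, rfl⟩
        exact ⟨[a], rfl, t, ht, rfl⟩
  have hsum : ∀ s : Finset (Fin k), ∃ E : RegularExpression (Fin k), IsStarFree E ∧
      alph E = ∑ a ∈ s, size (f a) ∧
      ∀ w, w ∈ E.matches' ↔ ∃ a ∈ s, ∃ t ∈ f a, w = a :: t := by
    intro s
    induction s using Finset.induction_on with
    | empty =>
      refine ⟨.zero, trivial, by simp [alph], fun w => ?_⟩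
      simp only [Finset.notMem_empty, false_and, exists_false, iff_false]
      exact Language.notMem_zero w
    | insert a s ha ihs =>
      obtain ⟨E, hE, hw, hm⟩ := ihs
      obtain ⟨F, hF, hw', hm'⟩ := hchild a
      refine ⟨.plus F E, ⟨hF, hE⟩, by simp [alph, hw, hw', Finset.sum_insert ha], fun w => ?_⟩
      have : w ∈ (RegularExpression.plus F E).matches' ↔ w ∈ F.matches' ∨ w ∈ E.matches' :=
        Iff.rfl
      rw [this, hm, hm']
      simp
  obtain ⟨E, hE, hw, hm⟩ := hsum Finset.univ
  refine ⟨.plus (if b then .epsilon else .zero) E, ⟨by cases b <;> trivial, hE⟩, ?_, ?_⟩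
  · cases b <;> simp [alph, hw, hsz]
  · ext w
    have : w ∈ (RegularExpression.plus (if b then .epsilon else .zero) E).matches' ↔
      w ∈ (if b then RegularExpression.epsilon else .zero).matches' ∨ w ∈ E.matches' := Iff.rfl
    rw [this, hm]
    have hb : w ∈ (if b then RegularExpression.epsilon else .zero :
        RegularExpression (Fin k)).matches' ↔ b = true ∧ w = [] := by
      cases b
      · simp
      · simp
    rw [hb]
    cases w with
    | nil => simp
    | cons a t => simp

lemma tries_zero : tries k 0 = {0} := by
  ext L
  constructor
  · rintro ⟨h, h'⟩
    exact eq_zero_of_pre_eq_empty ((Set.ncard_eq_zero h).1 h')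
  · rintro rfl
    exact ⟨by simp, by simp⟩

lemma tries_finite (k n : ℕ) : (tries k n).Finite := by
  cases n with
  | zero => simp [tries_zero]
  | succ n => exact (denoted_finite k n).subset (tries_subset_denoted k n)

/-! ### Supermultiplicativity -/

/-- Two tries can be joined below an accepting root along two distinct letters. -/
lemma ncard_tries_mul_le (hk : 2 ≤ k) (m n : ℕ) :
    (tries k m).ncard * (tries k n).ncard ≤ (tries k (m + n + 1)).ncard := by
  classical
  let a₀ : Fin k := ⟨0, by omega⟩
  let a₁ : Fin k := ⟨1, by omega⟩
  have h01 : a₁ ≠ a₀ := by simp [a₀, a₁]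
  let g : Language (Fin k) × Language (Fin k) → Fin k → Language (Fin k) := fun p a =>
    if a = a₀ then p.1 else if a = a₁ then p.2 else 0
  rw [← Set.ncard_prod]
  refine Set.ncard_le_ncard_of_injOn (fun p => build true (g p)) ?_ ?_ (tries_finite _ _)
  · rintro ⟨L, M⟩ ⟨⟨hL, hm⟩, ⟨hM, hn⟩⟩
    have hfin : ∀ a, (pre (g (L, M) a)).Finite := by
      intro a
      simp only [g]
      split_ifs
      · exact hL
      · exact hM
      · simp
    have hne : build true (g (L, M)) ≠ 0 := by
      intro h
      have : [] ∈ build true (g (L, M)) := rfl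
      rw [h] at this
      exact Language.notMem_zero _ this
    refine ⟨pre_build_finite hfin, ?_⟩
    rw [size_build hne hfin, Nat.add_right_cancel_iff]
    have : ∀ a, size (g (L, M) a) = (if a = a₀ then m else 0) + (if a = a₁ then n else 0) := by
      intro a
      simp only [g]
      by_cases h : a = a₀
      · subst h; simp [h01.symm, hm]
      · by_cases h' : a = a₁
        · subst h'; simp [h01, hn]
        · simp [h, h']
    simp [this, Finset.sum_add_distrib]
  · rintro ⟨L, M⟩ _ ⟨L', M'⟩ _ h
    have hg := (build_injective h).2
    have h0 := congrFun hg a₀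
    have h1 := congrFun hg a₁
    simp only [g, if_true, h01, if_false] at h0 h1
    rw [h0, h1]

lemma one_le_ncard_tries (hk : 2 ≤ k) (n : ℕ) : 1 ≤ (tries k n).ncard := by
  induction n with
  | zero => simp [tries_zero]
  | succ n ih =>
    have := ncard_tries_mul_le hk n 0
    rw [tries_zero, Set.ncard_singleton, mul_one] at this
    exact ih.trans this

/-! ### The generating function of tries of bounded height -/

open Classical in
/-- The languages whose trie has height less than `h`. -/
noncomputable def ofHeight (k : ℕ) : ℕ → Finset (Language (Fin k))
  | 0 => {0}
  | h + 1 => (Finset.univ ×ˢ Fintype.piFinset fun _ : Fin k => ofHeight k h).image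
      fun p : Bool × (Fin k → Language (Fin k)) => build p.1 p.2

lemma zero_mem_ofHeight (k h : ℕ) : (0 : Language (Fin k)) ∈ ofHeight k h := by
  induction h with
  | zero => simp [ofHeight]
  | succ h ih =>
    simp only [ofHeight, Finset.mem_image]
    exact ⟨(false, fun _ => 0), by simp [ih], build_false_zero⟩

lemma pre_finite_of_mem_ofHeight (h : ℕ) :
    ∀ L ∈ ofHeight k h, (pre L).Finite := by
  induction h with
  | zero => simp [ofHeight]
  | succ h ih =>
    intro L hL
    simp only [ofHeight, Finset.mem_image] at hL
    obtain ⟨⟨b, f⟩, hf, rfl⟩ := hL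
    simp only [Finset.mem_product, Finset.mem_univ, true_and, Fintype.mem_piFinset] at hf
    exact pre_build_finite fun a => ih _ (hf a)

/-- The recursion `V ↦ 1 + z (2 Vᵏ - 1)`: a nonempty trie is a root, an acceptance bit and `k`
subtries, except that a rejecting root without children does not occur. -/
lemma sum_ofHeight_succ (z : ℝ) (h : ℕ) :
    ∑ L ∈ ofHeight k (h + 1), z ^ size L =
      1 + z * (2 * (∑ L ∈ ofHeight k h, z ^ size L) ^ k - 1) := by
  classical
  set T := Fintype.piFinset fun _ : Fin k => ofHeight k h with hT
  have hfin : ∀ f ∈ T, ∀ a, (pre (f a)).Finite := fun f hf a =>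
    pre_finite_of_mem_ofHeight h _ (Fintype.mem_piFinset.1 hf a)
  have hprod : ∑ f ∈ T, z ^ (∑ a, size (f a)) = (∑ L ∈ ofHeight k h, z ^ size L) ^ k := by
    simp_rw [← Finset.prod_pow_eq_pow_sum]
    rw [hT, Finset.sum_prod_piFinset (ofHeight k h) (fun _ L => z ^ size L)]
    simp
  have htrue : ∀ f ∈ T, z ^ size (build true f) = z * z ^ (∑ a, size (f a)) := by
    intro f hf
    rw [size_build _ (hfin f hf), pow_succ']
    intro h
    have : [] ∈ build true f := rfl
    rw [h] at this
    exact Language.notMem_zero _ this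
  have h0T : (fun _ => 0) ∈ T := Fintype.mem_piFinset.2 fun _ => zero_mem_ofHeight k h
  have hfalse : ∀ f ∈ T, z ^ size (build false f) =
      z * z ^ (∑ a, size (f a)) + if f = (fun _ => 0) then 1 - z else 0 := by
    intro f hf
    split_ifs with hf0
    · subst hf0
      simp [build_false_zero]
    · rw [size_build _ (hfin f hf), pow_succ', add_zero]
      intro h
      exact hf0 (build_injective (h.trans build_false_zero.symm)).2
  rw [ofHeight, Finset.sum_image, Finset.sum_product]
  · rw [Fintype.sum_bool, Finset.sum_congr rfl htrue, Finset.sum_congr rfl hfalse,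
      Finset.sum_add_distrib, ← Finset.mul_sum, hprod, Finset.sum_ite_eq' T, if_pos h0T]
    ring
  · rintro ⟨b, f⟩ _ ⟨b', f'⟩ _ h
    obtain ⟨rfl, rfl⟩ := build_injective h
    rfl

/-- If there are at most `β ^ (n + 1)` tries of each size `n`, then the generating functions of
the tries of bounded height are bounded at every `z < 1 / β`, uniformly in the height. -/
lemma sum_ofHeight_le {β z : ℝ} (hβ : 0 ≤ β) (hz : 0 ≤ z) (hβz : β * z < 1)
    (hle : ∀ n, ((tries k n).ncard : ℝ) ≤ β ^ (n + 1)) (h : ℕ) :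
    ∑ L ∈ ofHeight k h, z ^ size L ≤ β * (1 - β * z)⁻¹ := by
  classical
  set N := (ofHeight k h).sup size + 1
  have hmaps : ∀ L ∈ ofHeight k h, size L ∈ Finset.range N := fun L hL =>
    Finset.mem_range.2 (Nat.lt_succ_of_le (Finset.le_sup hL))
  rw [← Finset.sum_fiberwise_of_maps_to hmaps]
  calc ∑ n ∈ Finset.range N, ∑ L ∈ ofHeight k h with size L = n, z ^ size L
      ≤ ∑ n ∈ Finset.range N, β * (β * z) ^ n := by
        refine Finset.sum_le_sum fun n _ => ?_
        have h1 : ∑ L ∈ ofHeight k h with size L = n, z ^ size L =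
            ((ofHeight k h).filter (fun L => size L = n)).card * z ^ n := by
          rw [← nsmul_eq_mul]
          exact Finset.sum_eq_card_nsmul fun L hL => by rw [(Finset.mem_filter.1 hL).2]
        have h2 : ((ofHeight k h).filter (fun L => size L = n)).card ≤ (tries k n).ncard := by
          rw [← Set.ncard_coe_finset]
          refine Set.ncard_le_ncard (fun L hL => ?_) (tries_finite k n)
          have hL' := Finset.mem_filter.1 (Finset.mem_coe.1 hL)
          exact ⟨pre_finite_of_mem_ofHeight h L hL'.1, hL'.2⟩
        calc _ = _ := h1
          _ ≤ β ^ (n + 1) * z ^ n := by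
            gcongr
            exact le_trans (by exact_mod_cast h2) (hle n)
          _ = _ := by rw [mul_pow]; ring
    _ = β * ∑ n ∈ Finset.range N, (β * z) ^ n := by rw [Finset.mul_sum]
    _ ≤ β * (1 - β * z)⁻¹ := by
        gcongr
        have h0 : 0 ≤ β * z := by positivity
        rw [← tsum_geometric_of_lt_one h0 hβz]
        exact (summable_geometric_of_lt_one h0 hβz).sum_le_tsum _ fun _ _ => by positivity

/-! ### The entropy inequality -/

/-- Gibbs' inequality for the binomial distribution with parameters `k` and `1 / k`, applied to
`2 (1 + u) ^ k - 1 = ∑ j, s j * k.choose j * u ^ j`, where `s 0 = 1` and `s j = 2` otherwise. -/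
lemma growth_mul_le (hk : 2 ≤ k) {u : ℝ} (hu : 0 < u) :
    (2 : ℝ) ^ (1 - (1 - 1 / (k : ℝ)) ^ k) * (k : ℝ) ^ k / ((k : ℝ) - 1) ^ (k - 1) * u ≤
      2 * (1 + u) ^ k - 1 := by
  have hk' : (2 : ℝ) ≤ k := by exact_mod_cast hk
  have hk0 : (0 : ℝ) < k := by linarith
  have hk1 : (0 : ℝ) < (k : ℝ) - 1 := by linarith
  set q : ℝ := 1 / k with hq
  have hq0 : 0 < q := by positivity
  have hq1 : 1 - q = (k - 1) / k := by rw [hq]; field_simp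
  have hq1' : 0 < 1 - q := by rw [hq1]; positivity
  set p0 : ℝ := (1 - q) ^ k with hp0
  set M : ℝ := (2 : ℝ) ^ (1 - p0) * (k : ℝ) ^ k / ((k : ℝ) - 1) ^ (k - 1) * u with hM
  have hMpos : 0 < M := by positivity
  let w : ℕ → ℝ := fun j => (k.choose j : ℝ) * q ^ j * (1 - q) ^ (k - j)
  have hw_nonneg : ∀ j, 0 ≤ w j := fun j => by positivity
  have hw : ∑ j ∈ Finset.range (k + 1), w j = 1 := by
    have := congrArg (Polynomial.eval q) (bernsteinPolynomial.sum ℝ k)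
    simpa [bernsteinPolynomial, Polynomial.eval_finsetSum, w] using this
  have hwj : ∑ j ∈ Finset.range (k + 1), w j * j = 1 := by
    have := congrArg (Polynomial.eval q) (bernsteinPolynomial.sum_smul ℝ k)
    simp only [bernsteinPolynomial, Polynomial.eval_finsetSum, nsmul_eq_mul,
      Polynomial.eval_mul, Polynomial.eval_natCast, Polynomial.eval_pow, Polynomial.eval_sub,
      Polynomial.eval_one, Polynomial.eval_X] at this
    have hkq : (k : ℝ) * q = 1 := by rw [hq]; field_simp
    rw [hkq] at this
    rw [← this]
    exact Finset.sum_congr rfl fun j _ => mul_comm _ _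
  let s : ℕ → ℝ := fun j => if j = 0 then 1 else 2
  have hs : ∀ j, 0 < s j := fun j => by simp only [s]; split_ifs <;> norm_num
  let K : ℝ := (k / (k - 1)) ^ k
  have hK : 0 < K := by positivity
  let y : ℝ := u * (k - 1)
  have hy : 0 < y := by positivity
  have hterm : ∀ j ∈ Finset.range (k + 1), w j * (s j * K * y ^ j) =
      s j * (k.choose j * u ^ j) := by
    intro j hj
    have hj' : j ≤ k := Nat.lt_succ_iff.1 (Finset.mem_range.1 hj)
    obtain ⟨i, rfl⟩ := Nat.exists_eq_add_of_le hj'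
    simp only [w, K, y, Nat.add_sub_cancel_left, hq1]
    simp only [hq, div_pow, one_pow, mul_pow, pow_add]
    field_simp
  have hsum : ∑ j ∈ Finset.range (k + 1), w j * (s j * K * y ^ j) = 2 * (1 + u) ^ k - 1 := by
    rw [Finset.sum_congr rfl hterm, add_comm 1 u, add_pow, Finset.sum_range_succ',
      Finset.sum_range_succ']
    simp [s, mul_add, Finset.mul_sum, mul_comm]
    ring
  have hlogs : ∑ j ∈ Finset.range (k + 1), w j * Real.log (s j) = (1 - p0) * Real.log 2 := by
    have h1 : ∑ j ∈ Finset.range k, w (j + 1) = 1 - p0 := by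
      rw [Finset.sum_range_succ'] at hw
      have : w 0 = p0 := by simp [w, hp0]
      linarith
    rw [Finset.sum_range_succ', ← h1, Finset.sum_mul]
    simp [s]
  have hlogM : Real.log M = (1 - p0) * Real.log 2 + Real.log K + Real.log y := by
    have hMK : M = 2 ^ (1 - p0) * K * y := by
      obtain ⟨i, hi⟩ : ∃ i, k = i + 1 := ⟨k - 1, by omega⟩
      have e : ((k : ℝ) - 1) ^ k = ((k : ℝ) - 1) ^ (k - 1) * (k - 1) := by
        rw [← pow_succ]; congr 1; omega
      simp only [hM, K, y, div_pow, e]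
      field_simp
    rw [hMK, Real.log_mul (by positivity) hy.ne', Real.log_mul (by positivity) hK.ne',
      Real.log_rpow (by norm_num)]
  -- `log x ≤ x - 1` at `x = s j * K * y ^ j / M`; the logarithms average to `0`
  have hkey : ∀ j ∈ Finset.range (k + 1),
      w j * (1 + (Real.log (s j) + Real.log K + j * Real.log y - Real.log M)) ≤
        w j * (s j * K * y ^ j) / M := by
    intro j _
    rw [mul_div_assoc]
    refine mul_le_mul_of_nonneg_left ?_ (hw_nonneg j)
    have hx : 0 < s j * K * y ^ j := mul_pos (mul_pos (hs j) hK) (by positivity)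
    have := Real.log_le_sub_one_of_pos (div_pos hx hMpos)
    rw [Real.log_div hx.ne' hMpos.ne', Real.log_mul (mul_pos (hs j) hK).ne' (by positivity),
      Real.log_mul (hs j).ne' hK.ne', Real.log_pow y j] at this
    linarith
  have hfinal := Finset.sum_le_sum hkey
  rw [← Finset.sum_div, hsum] at hfinal
  have hlhs : ∑ j ∈ Finset.range (k + 1),
      w j * (1 + (Real.log (s j) + Real.log K + j * Real.log y - Real.log M)) = 1 := by
    have : ∀ j, w j * (1 + (Real.log (s j) + Real.log K + j * Real.log y - Real.log M)) =
        w j * (1 + Real.log K - Real.log M) + w j * Real.log (s j) + (w j * j) * Real.log y := by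
      intro j; ring
    simp only [this]
    rw [Finset.sum_add_distrib, Finset.sum_add_distrib, ← Finset.sum_mul, ← Finset.sum_mul,
      hw, hwj, hlogs, hlogM]
    ring
  rw [hlhs, le_div_iff₀ hMpos, one_mul] at hfinal
  exact hfinal

/-- Replacing `(1 - 1 / k) ^ k`, the binomial probability of having no child, by its limit `1 / e`
loses strictly. -/
lemma growth_lt (hk : 2 ≤ k) :
    (2 : ℝ) ^ ((1 : ℝ) - 1 / Real.exp 1) * (k : ℝ) ^ k / ((k : ℝ) - 1) ^ (k - 1) <
      (2 : ℝ) ^ (1 - (1 - 1 / (k : ℝ)) ^ k) * (k : ℝ) ^ k / ((k : ℝ) - 1) ^ (k - 1) := by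
  have hk' : (2 : ℝ) ≤ k := by exact_mod_cast hk
  have hk1 : (0 : ℝ) < (k : ℝ) - 1 := by linarith
  have hlt : (1 - 1 / (k : ℝ)) ^ k < 1 / Real.exp 1 := by
    have h0 : 0 ≤ 1 - 1 / (k : ℝ) := by
      rw [sub_nonneg, div_le_one (by linarith)]; linarith
    have h1 : 1 - 1 / (k : ℝ) < Real.exp (-(1 / (k : ℝ))) := by
      have := Real.add_one_lt_exp (x := -(1 / (k : ℝ))) (by
        have : (0 : ℝ) < 1 / k := by positivity
        linarith)
      linarith
    calc (1 - 1 / (k : ℝ)) ^ k < Real.exp (-(1 / (k : ℝ))) ^ k :=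
          pow_lt_pow_left₀ h1 h0 (by omega)
      _ = 1 / Real.exp 1 := by
          rw [← Real.exp_nat_mul, one_div (Real.exp 1), ← Real.exp_neg]
          congr 1
          field_simp
  have hpow := Real.rpow_lt_rpow_of_exponent_lt (x := 2) (by norm_num) (sub_lt_sub_left hlt 1)
  gcongr

lemma one_le_growth (hk : 2 ≤ k) :
    1 ≤ (2 : ℝ) ^ ((1 : ℝ) - 1 / Real.exp 1) * (k : ℝ) ^ k / ((k : ℝ) - 1) ^ (k - 1) := by
  have hk' : (2 : ℝ) ≤ k := by exact_mod_cast hk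
  have hk1 : (0 : ℝ) < (k : ℝ) - 1 := by linarith
  rw [one_le_div (by positivity)]
  have h1 : (1 : ℝ) ≤ 2 ^ ((1 : ℝ) - 1 / Real.exp 1) := by
    refine Real.one_le_rpow (by norm_num) ?_
    rw [sub_nonneg, div_le_one (Real.exp_pos 1)]
    exact Real.one_le_exp (by norm_num)
  calc ((k : ℝ) - 1) ^ (k - 1) ≤ (k : ℝ) ^ (k - 1) := by gcongr; linarith
    _ ≤ (k : ℝ) ^ k := pow_le_pow_right₀ (by linarith) (by omega)
    _ ≤ _ := le_mul_of_one_le_left (by positivity) h1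

/-! ### From the generating function to the count -/

/-- If `2 (1 + u) ^ k - 1 ≥ G u` for all `u > 0` and `β < G`, then the number of tries of some
size exceeds the corresponding power of `β`: at `z` strictly between `1 / G` and `1 / β` the
recursion of `sum_ofHeight_succ` makes the generating functions grow geometrically. -/
lemma exists_lt_ncard_tries {β G : ℝ} (hβ : 0 < β) (hβG : β < G)
    (hG : ∀ u : ℝ, 0 < u → G * u ≤ 2 * (1 + u) ^ k - 1) :
    ∃ m, β ^ (m + 1) < ((tries k m).ncard : ℝ) := by
  by_contra! hle
  obtain ⟨r, hβr, hrG⟩ := exists_between hβG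
  have hr : 0 < r := hβ.trans hβr
  have hz : 0 < r⁻¹ := inv_pos.2 hr
  have hβz : β * r⁻¹ < 1 := by rwa [← div_eq_mul_inv, div_lt_one hr]
  have hGz : 1 < r⁻¹ * G := by rwa [mul_comm, ← div_eq_mul_inv, one_lt_div hr]
  have hgrow : ∀ h : ℕ, r⁻¹ * (r⁻¹ * G) ^ h ≤
      ∑ L ∈ ofHeight k (h + 1), r⁻¹ ^ size L - 1 := by
    intro h
    induction h with
    | zero =>
      rw [sum_ofHeight_succ]
      simp [ofHeight]
      norm_num
    | succ h ih =>
      rw [sum_ofHeight_succ]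
      set u := ∑ L ∈ ofHeight k (h + 1), r⁻¹ ^ size L - 1 with hu
      have hupos : 0 < u := lt_of_lt_of_le (by positivity) ih
      have hV : ∑ L ∈ ofHeight k (h + 1), r⁻¹ ^ size L = 1 + u := by rw [hu]; ring
      rw [hV]
      calc r⁻¹ * (r⁻¹ * G) ^ (h + 1) = (r⁻¹ * G) * (r⁻¹ * (r⁻¹ * G) ^ h) := by ring
        _ ≤ (r⁻¹ * G) * u := by gcongr
        _ = r⁻¹ * (G * u) := by ring
        _ ≤ r⁻¹ * (2 * (1 + u) ^ k - 1) := by gcongr; exact hG u hupos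
        _ = _ := by ring
  obtain ⟨h, hh⟩ := pow_unbounded_of_one_lt (β * (1 - β * r⁻¹)⁻¹ * r) hGz
  have h1 := hgrow h
  have h2 := sum_ofHeight_le hβ.le hz.le hβz hle (h + 1)
  have h3 : β * (1 - β * r⁻¹)⁻¹ < r⁻¹ * (r⁻¹ * G) ^ h := by
    rw [inv_mul_eq_div, lt_div_iff₀ hr]
    exact hh
  linarith

/-- A single good size `m` gives a lower bound at every size, by supermultiplicativity. -/
lemma pow_le_ncard_tries (hk : 2 ≤ k) {β : ℝ} (hβ : 0 ≤ β) {m : ℕ}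
    (hm : β ^ (m + 1) ≤ ((tries k m).ncard : ℝ)) (r q : ℕ) :
    β ^ ((m + 1) * q) ≤ ((tries k (r + (m + 1) * q)).ncard : ℝ) := by
  induction q with
  | zero =>
    simpa using one_le_ncard_tries hk r
  | succ q ih =>
    have h := ncard_tries_mul_le hk (r + (m + 1) * q) m
    have e : r + (m + 1) * (q + 1) = r + (m + 1) * q + m + 1 := by ring
    rw [e, mul_add_one, pow_add]
    calc β ^ ((m + 1) * q) * β ^ (m + 1)
        ≤ ((tries k (r + (m + 1) * q)).ncard : ℝ) * ((tries k m).ncard : ℝ) := by gcongr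
      _ ≤ _ := by exact_mod_cast h

end StarFreeCount

/-- Over a `k`-letter alphabet (`k ≥ 2`), the number of distinct languages denoted by
star-free regular expressions of alphabetic width exactly `n` is
`Ω((2^{1-1/e} · k^k / (k-1)^{k-1})^n)`. -/
theorem starfree_alphabetic_lower_bound (k : ℕ) (hk : 2 ≤ k) :
    ∃ c : ℝ, 0 < c ∧ ∃ N : ℕ, ∀ n : ℕ, N ≤ n →
      c * ((2 : ℝ) ^ ((1 : ℝ) - 1 / Real.exp 1) * (k : ℝ) ^ k / ((k : ℝ) - 1) ^ (k - 1)) ^ n ≤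
        (Nat.card {L : Language (Fin k) //
          ∃ E : RegularExpression (Fin k),
            IsStarFree E ∧ alph E = n ∧ E.matches' = L} : ℝ) := by
  set β : ℝ := (2 : ℝ) ^ ((1 : ℝ) - 1 / Real.exp 1) * (k : ℝ) ^ k / ((k : ℝ) - 1) ^ (k - 1)
    with hβdef
  have hβ1 : 1 ≤ β := StarFreeCount.one_le_growth hk
  have hβ0 : 0 < β := by linarith
  obtain ⟨m, hm⟩ := StarFreeCount.exists_lt_ncard_tries (k := k) hβ0
    (StarFreeCount.growth_lt hk) fun u hu => StarFreeCount.growth_mul_le hk hu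
  refine ⟨(β ^ m)⁻¹, by positivity, 0, fun n _ => ?_⟩
  have hdiv : (n + 1) % (m + 1) + (m + 1) * ((n + 1) / (m + 1)) = n + 1 := Nat.mod_add_div _ _
  have hlt : (n + 1) % (m + 1) < m + 1 := Nat.mod_lt _ (Nat.succ_pos m)
  have h1 := StarFreeCount.pow_le_ncard_tries hk hβ0.le hm.le
    ((n + 1) % (m + 1)) ((n + 1) / (m + 1))
  rw [hdiv] at h1
  have h2 : (StarFreeCount.tries k (n + 1)).ncard ≤ (StarFreeCount.denoted k n).ncard :=
    Set.ncard_le_ncard (StarFreeCount.tries_subset_denoted k n)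
      (StarFreeCount.denoted_finite k n)
  calc (β ^ m)⁻¹ * β ^ n ≤ β ^ ((m + 1) * ((n + 1) / (m + 1))) := by
        rw [inv_mul_le_iff₀ (by positivity), ← pow_add]
        exact pow_le_pow_right₀ hβ1 (by omega)
    _ ≤ ((StarFreeCount.tries k (n + 1)).ncard : ℝ) := h1
    _ ≤ ((StarFreeCount.denoted k n).ncard : ℝ) := by exact_mod_cast h2
    _ = _ := rfl
end

section
/- For every regular expression r in the alternative syntax over an alphabet Σ, the strong star normal form preserves the language: L(r•) = L(r). -/
/-!
The operator `•` drops an option only when the empty word is already present, so the only rule that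
needs an argument is the one for a star, where `(r•)*` becomes `((r•)°)*`. Everything
reduces to `L(r°)* = L(r)*` (`AltRE.kstar_lang_circ`), which holds by induction on `r` in
the Kleene algebra of languages. By `kstar_le_kstar_iff_le_kstar`, each case
amounts to bounding a language by a star. In the case of a product `rs` with `ε ∈ L(rs)`, both
factors contain `ε`, hence `L(r), L(s) ⊆ L(rs) ⊆ (L(r) + L(s))*`.
-/

/-- Regular expressions in the alternative syntax: letters, union, concatenation,
Kleene star, and the option operator `?`; there are no constants `∅` or `ε`. -/
inductive AltRE (α : Type*) : Type _
  | char : α → AltRE α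
  | plus : AltRE α → AltRE α → AltRE α
  | comp : AltRE α → AltRE α → AltRE α
  | star : AltRE α → AltRE α
  | opt : AltRE α → AltRE α

namespace AltRE

/-- The language denoted by an alternative-syntax regular expression. -/
def lang {α : Type*} : AltRE α → Language α
  | char a => {[a]}
  | plus r s => lang r + lang s
  | comp r s => lang r * lang s
  | star r => KStar.kstar (lang r)
  | opt r => lang r + 1

open Classical in
/-- The auxiliary operator `°`: `a° = a`, `(r+s)° = r°+s°`, `(r?)° = r°`, `(r*)° = r°`,
and `(rs)° = rs` if `ε ∉ L(rs)`, `(rs)° = r°+s°` otherwise. -/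
noncomputable def circ {α : Type*} : AltRE α → AltRE α
  | char a => char a
  | plus r s => plus (circ r) (circ s)
  | comp r s => if [] ∈ lang (comp r s) then plus (circ r) (circ s) else comp r s
  | star r => circ r
  | opt r => circ r

open Classical in
/-- The strong star normal form operator `•`: `a• = a`, `(r+s)• = r•+s•`,
`(rs)• = r•s•`, `(r*)• = ((r•)°)*`, and `(r?)• = r•` if `ε ∈ L(r)`,
`(r?)• = (r•)?` otherwise. -/
noncomputable def bullet {α : Type*} : AltRE α → AltRE α
  | char a => char a
  | plus r s => plus (bullet r) (bullet s)
  | comp r s => comp (bullet r) (bullet s)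
  | star r => star (circ (bullet r))
  | opt r => if [] ∈ lang r then bullet r else opt (bullet r)

end AltRE

theorem kstar_le_kstar_iff_le_kstar {K : Type*} [KleeneAlgebra K] {a b : K} :
    KStar.kstar a ≤ KStar.kstar b ↔ a ≤ KStar.kstar b :=
  ⟨fun h => le_kstar.trans h, fun h => (kstar_mono h).trans (kstar_idem b).le⟩

theorem kstar_add_congr {K : Type*} [KleeneAlgebra K] {a a' b b' : K}
    (ha : KStar.kstar a = KStar.kstar a') (hb : KStar.kstar b = KStar.kstar b') :
    KStar.kstar (a + b) = KStar.kstar (a' + b') := by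
  have key : ∀ {a a' b b' : K}, KStar.kstar a = KStar.kstar a' → KStar.kstar b = KStar.kstar b' →
      KStar.kstar (a + b) ≤ KStar.kstar (a' + b') := by
    intro a a' b b' ha hb
    refine kstar_le_kstar_iff_le_kstar.2 (add_le ?_ ?_)
    · exact (le_kstar.trans ha.le).trans (kstar_mono le_self_add)
    · exact (le_kstar.trans hb.le).trans (kstar_mono le_add_self)
  exact le_antisymm (key ha hb) (key ha.symm hb.symm)

theorem kstar_add_one {K : Type*} [KleeneAlgebra K] (a : K) :
    KStar.kstar (a + 1) = KStar.kstar a :=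
  le_antisymm (kstar_le_kstar_iff_le_kstar.2 (add_le le_kstar one_le_kstar))
    (kstar_mono le_self_add)

theorem kstar_add_eq_kstar_mul {K : Type*} [KleeneAlgebra K] {a b : K}
    (ha : 1 ≤ a) (hb : 1 ≤ b) : KStar.kstar (a + b) = KStar.kstar (a * b) := by
  apply le_antisymm
  · refine kstar_mono (add_le ?_ ?_)
    · simpa using mul_le_mul_right hb a
    · simpa using mul_le_mul_left ha b
  · refine kstar_le_kstar_iff_le_kstar.2 ?_
    rw [← kstar_mul_kstar (a + b)]
    exact mul_le_mul' (le_self_add.trans le_kstar) (le_add_self.trans le_kstar)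

theorem Language.one_le_iff_nil_mem {α : Type*} {l : Language α} : 1 ≤ l ↔ [] ∈ l :=
  Set.singleton_subset_iff

namespace AltRE

/-- `r` and `r°` become equivalent under a star, which restores the empty word, the iterations and
the concatenations that `r°` may lose. -/
theorem kstar_lang_circ {α : Type*} (r : AltRE α) :
    KStar.kstar (lang (circ r)) = KStar.kstar (lang r) := by
  induction r with
  | char a => rfl
  | plus r s ihr ihs => exact kstar_add_congr ihr ihs
  | comp r s ihr ihs =>
    by_cases h : [] ∈ lang (comp r s)
    · rw [circ, if_pos h]
      obtain ⟨u, hu, v, hv, huv⟩ := Language.mem_mul.1 h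
      obtain ⟨rfl, rfl⟩ := List.append_eq_nil_iff.1 huv
      exact (kstar_add_congr ihr ihs).trans (kstar_add_eq_kstar_mul
        (Language.one_le_iff_nil_mem.2 hu) (Language.one_le_iff_nil_mem.2 hv))
    · rw [circ, if_neg h]
  | star r ih => exact ih.trans (kstar_idem _).symm
  | opt r ih => exact ih.trans (kstar_add_one _).symm

end AltRE

/-- Strong star normal form preserves the language: `L(r•) = L(r)`. -/
theorem lang_bullet {α : Type*} (r : AltRE α) : AltRE.lang (AltRE.bullet r) = AltRE.lang r := by
  induction r with
  | char a => rfl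
  | plus r s ihr ihs => simp only [AltRE.bullet, AltRE.lang, ihr, ihs]
  | comp r s ihr ihs => simp only [AltRE.bullet, AltRE.lang, ihr, ihs]
  | star r ih => simp only [AltRE.bullet, AltRE.lang, AltRE.kstar_lang_circ, ih]
  | opt r ih =>
    by_cases h : [] ∈ AltRE.lang r
    · rw [AltRE.bullet, if_pos h, ih, AltRE.lang]
      exact (add_eq_left_iff_le.2 (Language.one_le_iff_nil_mem.2 h)).symm
    · rw [AltRE.bullet, if_neg h, AltRE.lang, AltRE.lang, ih]
end

section
/- For every regular expression r in the alternative syntax over an alphabet Σ, the ordinary length does not increase when passing to strong star normal form: |r•| ≤ |r|. -/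
namespace AltRE

/-- Is the top-level operator a union? -/
def isPlus {α : Type*} : AltRE α → Bool
  | plus _ _ => true
  | _ => false

/-- Is the top-level operator a concatenation? -/
def isComp {α : Type*} : AltRE α → Bool
  | comp _ _ => true
  | _ => false

/-- Ordinary length of an alternative-syntax regular expression: the length of the
string denoting it under the usual priority rules, with only necessary parentheses. -/
def ord {α : Type*} : AltRE α → ℕ
  | char _ => 1
  | plus r s => ord r + ord s + 1
  | comp r s => (ord r + if isPlus r then 2 else 0) + (ord s + if isPlus s then 2 else 0)
  | star r => (ord r + if isPlus r || isComp r then 2 else 0) + 1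
  | opt r => (ord r + if isPlus r || isComp r then 2 else 0) + 1

end AltRE

namespace AltRE

/-- The length of an expression as the argument of `*` or `?`, where unions and
concatenations both need parentheses. -/
def ordUnary {α : Type*} (r : AltRE α) : ℕ :=
  ord r + if isPlus r || isComp r then 2 else 0

/-- The length of an expression as a factor of a concatenation, where only unions need
parentheses. -/
def ordFactor {α : Type*} (r : AltRE α) : ℕ :=
  ord r + if isPlus r then 2 else 0

theorem nil_mem_lang_plus {α : Type*} (r s : AltRE α) :
    [] ∈ lang (plus r s) ↔ [] ∈ lang r ∨ [] ∈ lang s := by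
  simp [lang, Language.mem_add]

theorem nil_mem_lang_comp {α : Type*} (r s : AltRE α) :
    [] ∈ lang (comp r s) ↔ [] ∈ lang r ∧ [] ∈ lang s := by
  simp [lang, Language.mem_mul]

theorem nil_notMem_lang_char {α : Type*} (a : α) : [] ∉ lang (char a) := by
  intro h
  have h' : ([] : List α) = [a] := h
  simp at h'

open Classical in
/-- The saving of one symbol on nullable expressions pays for the `+` sign that `°` inserts
when it turns a concatenation of two nullable factors into a union. -/
theorem circ_bounds {α : Type*} (r : AltRE α) :
    (ord (circ r) + if [] ∈ lang r then 1 else 0) ≤ ord r ∧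
    (ordUnary (circ r) + if [] ∈ lang r then 1 else 0) ≤ ordUnary r := by
  induction r with
  | char a => simp [circ, nil_notMem_lang_char]
  | plus r s ihr ihs =>
    have hr := ihr.1
    have hs := ihs.1
    simp only [nil_mem_lang_plus, circ, ord, ordUnary, isPlus, Bool.true_or, if_true]
    by_cases h1 : [] ∈ lang r <;> by_cases h2 : [] ∈ lang s <;>
      simp only [h1, h2, or_self, or_true, true_or, if_true, if_false] at hr hs ⊢ <;> omega
  | comp r s ihr ihs =>
    by_cases h : [] ∈ lang (comp r s)
    · obtain ⟨h1, h2⟩ := (nil_mem_lang_comp r s).1 h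
      have hr := ihr.1
      have hs := ihs.1
      simp only [h1, h2, if_true] at hr hs
      simp only [circ, h, if_true, ordUnary, ord, isPlus, isComp, Bool.true_or, Bool.or_true]
      omega
    · simp [circ, h]
  | star r ih =>
    have h1 : ord (star r) = ordUnary r + 1 := rfl
    have h2 : ordUnary (star r) = ordUnary r + 1 := rfl
    have h3 : ord r ≤ ordUnary r := Nat.le_add_right _ _
    simp only [circ]
    split_ifs <;> omega
  | opt r ih =>
    have h1 : ord (opt r) = ordUnary r + 1 := rfl
    have h2 : ordUnary (opt r) = ordUnary r + 1 := rfl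
    have h3 : ord r ≤ ordUnary r := Nat.le_add_right _ _
    simp only [circ]
    split_ifs <;> omega

theorem ordUnary_circ_le {α : Type*} (r : AltRE α) : ordUnary (circ r) ≤ ordUnary r :=
  le_trans (Nat.le_add_right _ _) (circ_bounds r).2

theorem ordFactor_le_ordUnary {α : Type*} (r : AltRE α) : ordFactor r ≤ ordUnary r := by
  cases r <;> simp [ordFactor, ordUnary, isPlus]

/-- Since `•` can change the outermost operator, the bound has to be carried through the
induction in all three contexts at once. -/
theorem bullet_bounds {α : Type*} (r : AltRE α) :
    ord (bullet r) ≤ ord r ∧ ordFactor (bullet r) ≤ ordFactor r ∧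
      ordUnary (bullet r) ≤ ordUnary r := by
  induction r with
  | char a => exact ⟨le_rfl, le_rfl, le_rfl⟩
  | plus r s ihr ihs =>
    have hr := ihr.1
    have hs := ihs.1
    simp only [bullet, ordFactor, ordUnary, ord, isPlus, Bool.true_or, if_true]
    omega
  | comp r s ihr ihs =>
    have h : ord (comp (bullet r) (bullet s)) ≤ ord (comp r s) :=
      Nat.add_le_add ihr.2.1 ihs.2.1
    exact ⟨h, Nat.add_le_add_right h 0, Nat.add_le_add_right h 2⟩
  | star r ih =>
    have h : ord (star (circ (bullet r))) ≤ ord (star r) :=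
      Nat.add_le_add_right ((ordUnary_circ_le _).trans ih.2.2) 1
    exact ⟨h, h, h⟩
  | opt r ih =>
    by_cases h : [] ∈ lang r
    · -- Deleting `?` may expose a union or concatenation, but `r?` already paid for
      -- its parentheses.
      have h1 : ord (opt r) = ordUnary r + 1 := rfl
      have h2 : ordFactor (opt r) = ordUnary r + 1 := rfl
      have h3 : ordUnary (opt r) = ordUnary r + 1 := rfl
      have h4 := ordFactor_le_ordUnary (bullet r)
      have h5 : ord (bullet r) ≤ ordUnary (bullet r) := Nat.le_add_right _ _
      simp only [bullet, h, if_true]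
      omega
    · have h' : ord (opt (bullet r)) ≤ ord (opt r) := Nat.add_le_add_right ih.2.2 1
      simp only [bullet, h, if_false]
      exact ⟨h', h', h'⟩

end AltRE

/-- Passing to strong star normal form never increases the ordinary length. -/
theorem ord_bullet_le {α : Type*} (r : AltRE α) :
    AltRE.ord (AltRE.bullet r) ≤ AltRE.ord r := by
  exact (AltRE.bullet_bounds r).1
end

section
/- For every regular expression r in the alternative syntax over an alphabet Σ: if ε ∈ L(r) then |r°| ≤ |r| − 1, and in all cases |r°| ≤ |r|. (Note that in the alternative syntax, L(r) is never ∅ and never {ε}.) -/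
/-- Positivity makes the truncated subtraction `ord r - 1` a genuine one. -/
theorem AltRE.ord_pos {α : Type*} (r : AltRE α) : 0 < AltRE.ord r := by
  induction r <;> simp only [AltRE.ord] <;> omega

theorem AltRE.nil_mem_comp {α : Type*} {r s : AltRE α}
    (h : [] ∈ AltRE.lang (AltRE.comp r s)) : [] ∈ AltRE.lang r ∧ [] ∈ AltRE.lang s := by
  obtain ⟨a, ha, b, hb, hab⟩ := Language.mem_mul.1 h
  obtain ⟨rfl, rfl⟩ := List.append_eq_nil_iff.1 hab
  exact ⟨ha, hb⟩

/-- If `ε ∈ L(r)` then `|r°| ≤ |r| − 1`, and in all cases `|r°| ≤ |r|`. -/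
theorem ord_circ_le {α : Type*} (r : AltRE α) :
    ([] ∈ AltRE.lang r → AltRE.ord (AltRE.circ r) ≤ AltRE.ord r - 1) ∧
      AltRE.ord (AltRE.circ r) ≤ AltRE.ord r := by
  induction r with
  | char a =>
    refine ⟨fun h => ?_, le_rfl⟩
    have h' : ([] : List α) = [a] := h
    simp at h'
  | plus r s ihr ihs =>
    have hr := AltRE.ord_pos r
    have hs := AltRE.ord_pos s
    simp only [AltRE.circ, AltRE.ord]
    refine ⟨fun h => ?_, by omega⟩
    rcases (Language.mem_add _ _ _).1 h with h | h
    · have := ihr.1 h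
      omega
    · have := ihs.1 h
      omega
  | comp r s ihr ihs =>
    have hr := AltRE.ord_pos r
    have hs := AltRE.ord_pos s
    by_cases h : [] ∈ AltRE.lang (AltRE.comp r s)
    · obtain ⟨h₁, h₂⟩ := AltRE.nil_mem_comp h
      have := ihr.1 h₁
      have := ihs.1 h₂
      simp only [AltRE.circ, if_pos h, AltRE.ord]
      omega
    · simp only [AltRE.circ, if_neg h]
      exact ⟨fun h' => absurd h' h, le_rfl⟩
  | star r ih =>
    simp only [AltRE.circ, AltRE.ord]
    omega
  | opt r ih =>
    simp only [AltRE.circ, AltRE.ord]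
    omega
end

section
/- Fix k ≥ 1 and define s : ℤ → ℕ by s(n) = 0 for n ≤ 0, s(1) = k, and s(n) = k·s(n−1) + k·s(n−5) for n ≥ 2. Then for every n ≥ 1, R_k(n) ≥ s(n). (The quantity s(n) counts the expressions of the form w₁(ε + w₂(ε + ⋯ (ε + w_m)⋯)) with nonempty words w_i and ordinary length n, which denote pairwise distinct languages.) -/
/-- `Rlang k n` is the number of distinct languages over a `k`-letter alphabet denoted
by regular expressions of ordinary length exactly `n`. -/
noncomputable def Rlang (k n : ℕ) : ℕ :=
  Nat.card {L : Language (Fin k) //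
    ∃ E : RegularExpression (Fin k), ord E = n ∧ E.matches' = L}

theorem one_le_ord {α : Type*} (E : RegularExpression α) : 1 ≤ ord E := by
  induction E <;> simp only [ord] <;> omega

theorem finite_ord_le (k n : ℕ) : {E : RegularExpression (Fin k) | ord E ≤ n}.Finite := by
  induction n with
  | zero =>
    refine Set.finite_empty.subset fun E hE => ?_
    have := one_le_ord E
    simp only [Set.mem_ofPred_eq] at hE
    omega
  | succ n ih =>
    set S := {E : RegularExpression (Fin k) | ord E ≤ n} with hS
    refine ((((((Set.finite_singleton RegularExpression.zero).union
      (Set.finite_singleton RegularExpression.epsilon)).union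
      (Set.finite_range RegularExpression.char)).union
      (Set.Finite.image2 RegularExpression.plus ih ih)).union
      (Set.Finite.image2 RegularExpression.comp ih ih)).union
      (ih.image RegularExpression.star)).subset fun E hE => ?_
    simp only [Set.mem_ofPred_eq] at hE
    cases E with
    | zero => simp
    | epsilon => simp
    | char a => simp
    | plus F G =>
      have := one_le_ord F
      have := one_le_ord G
      simp only [ord] at hE
      exact Or.inl (Or.inl (Or.inr ⟨F, by simp only [hS, Set.mem_ofPred_eq]; omega, G,
        by simp only [hS, Set.mem_ofPred_eq]; omega, rfl⟩))
    | comp F G =>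
      have := one_le_ord F
      have := one_le_ord G
      simp only [ord] at hE
      exact Or.inl (Or.inr ⟨F, by simp only [hS, Set.mem_ofPred_eq]; omega, G,
        by simp only [hS, Set.mem_ofPred_eq]; omega, rfl⟩)
    | star F =>
      simp only [ord] at hE
      exact Or.inr ⟨F, by simp only [hS, Set.mem_ofPred_eq]; omega, rfl⟩

theorem finite_langs (k n : ℕ) : {L : Language (Fin k) |
    ∃ E : RegularExpression (Fin k), ord E = n ∧ E.matches' = L}.Finite := by
  refine ((finite_ord_le k n).image RegularExpression.matches').subset ?_
  rintro L ⟨E, hE, rfl⟩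
  exact ⟨E, hE.le, rfl⟩

/-- Nonempty languages not containing the empty word that are denoted by an expression of ordinary
length `n` whose top-level operator is not a union. -/
def goodLang (k n : ℕ) : Set (Language (Fin k)) :=
  {L | (∃ E : RegularExpression (Fin k), ord E = n ∧ isPlus E = false ∧ E.matches' = L) ∧
    [] ∉ L ∧ ∃ w, w ∈ L}

theorem goodLang_subset (k n : ℕ) : goodLang k n ⊆ {L : Language (Fin k) |
    ∃ E : RegularExpression (Fin k), ord E = n ∧ E.matches' = L} :=
  fun _ ⟨⟨E, h, _, h'⟩, _⟩ => ⟨E, h, h'⟩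

instance finite_goodLang (k n : ℕ) : Finite (goodLang k n) :=
  ((finite_langs k n).subset (goodLang_subset k n)).to_subtype

theorem mem_prefix {α : Type*} (a : α) (L : Language α) (w : List α) :
    w ∈ ({[a]} : Language α) * L ↔ ∃ v ∈ L, w = a :: v := by
  rw [Language.mem_mul]
  constructor
  · rintro ⟨x, rfl, v, hv, rfl⟩
    exact ⟨v, hv, rfl⟩
  · rintro ⟨v, hv, rfl⟩
    exact ⟨[a], rfl, v, hv, rfl⟩

theorem prefix_inj {α : Type*} {a b : α} {L M : Language α} (hL : ∃ w, w ∈ L)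
    (h : ({[a]} : Language α) * L = {[b]} * M) : a = b ∧ L = M := by
  have key : ∀ c v, (c = a ∧ v ∈ L) ↔ (c = b ∧ v ∈ M) := by
    intro c v
    have h1 : c :: v ∈ ({[a]} : Language α) * L ↔ c :: v ∈ ({[b]} : Language α) * M := by rw [h]
    simpa [mem_prefix, and_comm] using h1
  obtain ⟨w, hw⟩ := hL
  have hab : a = b := ((key a w).1 ⟨rfl, hw⟩).1
  subst hab
  exact ⟨rfl, Language.ext fun v => by simpa using key a v⟩

theorem one_add_inj {α : Type*} {L M : Language α} (hL : [] ∉ L) (hM : [] ∉ M)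
    (h : 1 + L = 1 + M) : L = M := by
  refine Language.ext fun v => ?_
  have h1 : v ∈ 1 + L ↔ v ∈ 1 + M := by rw [h]
  rw [Language.mem_add, Language.mem_add, Language.mem_one] at h1
  by_cases hv : v = []
  · subst hv
    exact iff_of_false hL hM
  · simpa [hv] using h1

theorem nil_mem_one_add {α : Type*} (L : Language α) : [] ∈ 1 + L := by
  rw [Language.mem_add]
  exact Or.inl Language.nil_mem_one

theorem prefix_mem_goodLang {k n : ℕ} (a : Fin k) {L : Language (Fin k)} (hL : L ∈ goodLang k n) :
    ({[a]} : Language (Fin k)) * L ∈ goodLang k (n + 1) := by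
  obtain ⟨⟨E, h1, h2, rfl⟩, -, w, hw⟩ := hL
  refine ⟨⟨.comp (.char a) E, ?_, rfl, rfl⟩, ?_, a :: w, ?_⟩
  · simp only [ord, h1, h2]
    simp [isPlus, add_comm]
  · simp [mem_prefix]
  · rw [mem_prefix]; exact ⟨w, hw, rfl⟩

theorem prefix_one_add_mem_goodLang {k n : ℕ} (a : Fin k) {L : Language (Fin k)}
    (hL : L ∈ goodLang k n) :
    ({[a]} : Language (Fin k)) * (1 + L) ∈ goodLang k (n + 5) := by
  obtain ⟨⟨E, h1, h2, rfl⟩, -, -⟩ := hL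
  refine ⟨⟨.comp (.char a) (.plus .epsilon E), ?_, rfl, rfl⟩, ?_, [a], ?_⟩
  · simp [ord, h1, isPlus]; omega
  · simp [mem_prefix]
  · rw [mem_prefix]; exact ⟨[], nil_mem_one_add _, rfl⟩

theorem le_card_goodLang_one (k : ℕ) : k ≤ Nat.card (goodLang k 1) := by
  have := Nat.card_le_card_of_injective
    (fun a : Fin k => (⟨({[a]} : Language (Fin k)),
      ⟨⟨.char a, rfl, rfl, rfl⟩, fun h => List.cons_ne_nil a [] (Set.mem_singleton_iff.1 h).symm,
        [a], rfl⟩⟩ : goodLang k 1))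
    (fun a b h => by
      have h1 := Set.singleton_injective (Subtype.ext_iff.1 h)
      simpa using h1)
  simpa using this

theorem card_goodLang_succ (k n : ℕ) :
    k * Nat.card (goodLang k n) ≤ Nat.card (goodLang k (n + 1)) := by
  have := Nat.card_le_card_of_injective
    (fun p : Fin k × goodLang k n =>
      (⟨_, prefix_mem_goodLang p.1 p.2.2⟩ : goodLang k (n + 1)))
    (fun ⟨a, L, hL⟩ ⟨b, M, hM⟩ h => by
      obtain ⟨rfl, rfl⟩ := prefix_inj hL.2.2 (Subtype.ext_iff.1 h)
      rfl)
  simpa [Nat.card_prod] using this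

theorem card_goodLang_add_five (k n : ℕ) :
    k * Nat.card (goodLang k (n + 4)) + k * Nat.card (goodLang k n) ≤
      Nat.card (goodLang k (n + 5)) := by
  have := Nat.card_le_card_of_injective
    (Sum.elim
      (fun p : Fin k × goodLang k (n + 4) =>
        (⟨_, prefix_mem_goodLang p.1 p.2.2⟩ : goodLang k (n + 5)))
      (fun p : Fin k × goodLang k n =>
        (⟨_, prefix_one_add_mem_goodLang p.1 p.2.2⟩ : goodLang k (n + 5))))
    (by
      rintro (⟨a, L, hL⟩ | ⟨a, L, hL⟩) (⟨b, M, hM⟩ | ⟨b, M, hM⟩) h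
      · obtain ⟨rfl, rfl⟩ := prefix_inj hL.2.2 (Subtype.ext_iff.1 h)
        rfl
      · have h2 : L = 1 + M := (prefix_inj hL.2.2 (Subtype.ext_iff.1 h)).2
        exact absurd (h2 ▸ nil_mem_one_add M) hL.2.1
      · have h2 : 1 + L = M := (prefix_inj ⟨[], nil_mem_one_add L⟩ (Subtype.ext_iff.1 h)).2
        exact absurd (h2 ▸ nil_mem_one_add L) hM.2.1
      · obtain ⟨rfl, h2⟩ := prefix_inj ⟨[], nil_mem_one_add L⟩ (Subtype.ext_iff.1 h)
        obtain rfl := one_add_inj hL.2.1 hM.2.1 h2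
        rfl)
  simpa [Nat.card_prod, Nat.card_sum] using this

/-- If `s : ℤ → ℕ` satisfies `s(n) = 0` for `n ≤ 0`, `s(1) = k`, and
`s(n) = k·s(n−1) + k·s(n−5)` for `n ≥ 2`, then `R_k(n) ≥ s(n)` for every `n ≥ 1`. -/
theorem grammar_lower_bound (k : ℕ) (hk : 1 ≤ k) (s : ℤ → ℕ)
    (hs0 : ∀ n : ℤ, n ≤ 0 → s n = 0) (hs1 : s 1 = k)
    (hsrec : ∀ n : ℤ, 2 ≤ n → s n = k * s (n - 1) + k * s (n - 5)) :
    ∀ n : ℕ, 1 ≤ n → s n ≤ Rlang k n := by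
  have key : ∀ n : ℕ, s n ≤ Nat.card (goodLang k n) := by
    intro n
    induction n using Nat.strong_induction_on with
    | _ n ih =>
      rcases lt_or_ge n 5 with h5 | h5
      · rcases n with _ | _ | n
        · simp [hs0 0 le_rfl]
        · simpa [hs1] using le_card_goodLang_one k
        · -- the second term of the recurrence vanishes for lengths below `5`
          have e : s ((n + 2 : ℕ) : ℤ) = k * s ((n + 1 : ℕ) : ℤ) := by
            rw [hsrec _ (by push_cast; omega), hs0 (((n + 2 : ℕ) : ℤ) - 5) (by omega),
              show ((n + 2 : ℕ) : ℤ) - 1 = ((n + 1 : ℕ) : ℤ) by push_cast; ring]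
            simp
          have h1 := Nat.mul_le_mul_left k (ih (n + 1) (by omega))
          have h2 := card_goodLang_succ k (n + 1)
          exact (e.le.trans h1).trans h2
      · obtain ⟨m, rfl⟩ := Nat.exists_eq_add_of_le' h5
        have e : s ((m + 5 : ℕ) : ℤ) = k * s ((m + 4 : ℕ) : ℤ) + k * s (m : ℤ) := by
          rw [hsrec _ (by push_cast; omega),
            show ((m + 5 : ℕ) : ℤ) - 1 = ((m + 4 : ℕ) : ℤ) by push_cast; ring,
            show ((m + 5 : ℕ) : ℤ) - 5 = (m : ℤ) by push_cast; ring]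
        have h1 := Nat.mul_le_mul_left k (ih (m + 4) (by omega))
        have h2 := Nat.mul_le_mul_left k (ih m (by omega))
        exact (e.le.trans (add_le_add h1 h2)).trans (card_goodLang_add_five k m)
  intro n _
  exact (key n).trans (Nat.card_mono (finite_langs k n) (goodLang_subset k n))
end
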